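/- There exists a constant C > 0 such that the following holds for all positive integers n, k, c. Suppose Π : {0,1}^{n×k} → ℝ is a finite linear combination Π = Σ_j a_j χ_j of min{c,k}-cylinder intersections with Σ_j |a_j| ≤ 2^c, such that |Π(X)| ≤ 1 for all X ∈ {0,1}^{n×k} and |UDISJ_{n,k}(X) − Π(X)| ≤ 1/4 for all X in the domain of UDISJ_{n,k}. Then C(k,≤c)² · c⁴ ≥ C·n, where C(k,≤c) = Σ_{i=0}^{min{c,k}} C(k,i). -/

import Mathlib

open Finset

/-- `X ∈ {0,1}^{n×k}` has at most one all-ones row (the domain of `UDISJ_{n,k}`). -/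
def AtMostOneAllOnes (n k : ℕ) (X : Fin n → Fin k → Bool) : Prop :=
  (Finset.univ.filter (fun i : Fin n => ∀ j, X i j = true)).card ≤ 1

/-- The value of (unique) set disjointness: `1` iff `X` has no all-ones row. -/
def DISJ (n k : ℕ) (X : Fin n → Fin k → Bool) : Bool :=
  decide (∀ i, ∃ j, X i j = false)

/-- `χ` is an `S`-cylinder intersection on `{0,1}^{n×k}`: a product over `j ∈ S` of
`{0,1}`-valued functions `φ j`, where `φ j` does not depend on the `j`-th column. -/
def IsCylinderOn (n k : ℕ) (S : Finset (Fin k))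
    (χ : (Fin n → Fin k → Bool) → ℝ) : Prop :=
  ∃ φ : Fin k → ((Fin n → Fin k → Bool) → ℝ),
    (∀ j ∈ S, ∀ X, φ j X = 0 ∨ φ j X = 1) ∧
    (∀ j ∈ S, ∀ X Y, (∀ i, ∀ j', j' ≠ j → X i j' = Y i j') → φ j X = φ j Y) ∧
    (∀ X, χ X = ∏ j ∈ S, φ j X)



namespace UD

abbrev Row (m : ℕ) := (Fin m → Bool) × Bool

def full {m : ℕ} (r : Row m) : Prop := ∀ j, r.1 j = true

instance {m : ℕ} : DecidablePred (full (m := m)) := fun r => by unfold full; infer_instance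

def sgn (b : Bool) : ℝ := if b then -1 else 1

/-- number of `t` satisfying `P` -/
def cnt {T : Type} [Fintype T] (P : T → Prop) [DecidablePred P] : ℕ := (univ.filter P).card

theorem cnt_subtype {T : Type} [Fintype T] (p Q : T → Prop) [DecidablePred p] [DecidablePred Q] :
    cnt (fun s : {t // p t} => Q s.1) = cnt (fun t => p t ∧ Q t) := by
  unfold cnt
  rw [← Finset.card_map (Function.Embedding.subtype p)]
  congr 1
  ext t
  simp only [Finset.mem_map, Finset.mem_filter, Finset.mem_univ, true_and, Function.Embedding.subtype_apply]
  constructor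
  · rintro ⟨s, hs, rfl⟩
    exact ⟨s.2, hs⟩
  · rintro ⟨h1, h2⟩
    exact ⟨⟨t, h1⟩, h2, rfl⟩

theorem cnt_congr {T : Type} [Fintype T] {P Q : T → Prop} [DecidablePred P] [DecidablePred Q]
    (h : ∀ t, P t ↔ Q t) : cnt P = cnt Q := by
  unfold cnt
  congr 1
  ext t
  simp [h]

theorem cnt_eq_zero {T : Type} [Fintype T] {P : T → Prop} [DecidablePred P] :
    cnt P = 0 ↔ ∀ t, ¬ P t := by
  unfold cnt
  simp [Finset.filter_eq_empty_iff]

/-- split counts along a predicate -/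
theorem cnt_split {T : Type} [Fintype T] (P Q : T → Prop) [DecidablePred P] [DecidablePred Q] :
    cnt P = cnt (fun t => P t ∧ Q t) + cnt (fun t => P t ∧ ¬ Q t) := by
  unfold cnt
  rw [← Finset.filter_filter, ← Finset.filter_filter]
  exact (Finset.card_filter_add_card_filter_not _).symm

def lam {T β : Type} [Fintype T] [Fintype β] [DecidableEq β] {m : ℕ} (blk : T → β)
    (Z : T → Row m) : ℝ :=
  (∏ b, if cnt (fun t => blk t = b ∧ full (Z t)) = 1 then (1 : ℝ) else 0) *
    ∏ t, if full (Z t) then sgn (Z t).2 else 1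

/-- products of bounded functions; the `j`-th one does not depend on column `j` -/
def Cyl {T : Type} {m : ℕ} (χ : (T → Row m) → ℝ) : Prop :=
  ∃ (ψ : (T → Row m) → ℝ) (φ : Fin m → (T → Row m) → ℝ),
    (∀ Z, |ψ Z| ≤ 1) ∧ (∀ j Z, |φ j Z| ≤ 1) ∧
    (∀ Z Z', (∀ t, (Z t).1 = (Z' t).1) → ψ Z = ψ Z') ∧
    (∀ j Z Z', (∀ t, (Z t).2 = (Z' t).2 ∧ ∀ j', j' ≠ j → (Z t).1 j' = (Z' t).1 j') →
      φ j Z = φ j Z') ∧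
    ∀ Z, χ Z = ψ Z * ∏ j, φ j Z

theorem fiber_prod {T β α : Type} [Fintype T] [DecidableEq T] [Fintype β] [DecidableEq β]
    [Fintype α] (blk : T → β)
    (K : ∀ b, ({t // blk t = b} → α) → ℝ) :
    ∑ Z : T → α, ∏ b, K b (fun t => Z t.1) = ∏ b, ∑ z : {t // blk t = b} → α, K b z := by
  rw [Finset.prod_univ_sum, Fintype.piFinset_univ]
  let e : (T → α) ≃ ∀ b, ({t // blk t = b} → α) :=
    { toFun := fun Z b t => Z t.1
      invFun := fun g t => g (blk t) ⟨t, rfl⟩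
      left_inv := fun Z => rfl
      right_inv := fun g => by
        funext b t
        obtain ⟨t, ht⟩ := t
        subst ht
        rfl }
  exact Fintype.sum_equiv e _ _ (fun Z => rfl)

theorem pi_prod {R α : Type} [Fintype R] [DecidableEq R] [Fintype α]
    (g : R → α → ℝ) : ∑ z : R → α, ∏ t, g t (z t) = ∏ t, ∑ a, g t a := by
  rw [Finset.prod_univ_sum, Fintype.piFinset_univ]

/-- exchanging the weight at one coordinate -/
theorem swap_coord {R α : Type} [Fintype R] [DecidableEq R] [Fintype α] (i : R)
    (c d : α → ℝ) (C : ℝ) (h : ∑ a, c a = C * ∑ a, d a) (G : (R → α) → ℝ)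
    (hG : ∀ z z', (∀ t, t ≠ i → z t = z' t) → G z = G z') :
    ∑ z : R → α, c (z i) * G z = C * ∑ z : R → α, d (z i) * G z := by
  have key : ∀ c : α → ℝ, ∑ z : R → α, c (z i) * G z =
      (∑ a, c a) * ∑ w : {j // j ≠ i} → α, ∑ a, G ((Equiv.funSplitAt i α).symm (a, w)) / (Fintype.card α) := by
    intro c
    rw [← Equiv.sum_comp (Equiv.funSplitAt i α).symm, Fintype.sum_prod_type_right, Finset.mul_sum]
    refine Finset.sum_congr rfl fun w _ => ?_
    have h1 : ∀ a a', G ((Equiv.funSplitAt i α).symm (a, w)) =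
        G ((Equiv.funSplitAt i α).symm (a', w)) := by
      intro a a'
      apply hG
      intro t ht
      simp [Equiv.funSplitAt, Equiv.piSplitAt, ht]
    have h2 : ∀ a, ((Equiv.funSplitAt i α).symm (a, w)) i = a := by
      intro a
      simp [Equiv.funSplitAt, Equiv.piSplitAt]
    rcases isEmpty_or_nonempty α with hα | hα
    · simp
    obtain ⟨a0⟩ := hα
    have h3 : ∀ a, G ((Equiv.funSplitAt i α).symm (a, w)) = G ((Equiv.funSplitAt i α).symm (a0, w)) :=
      fun a => h1 a a0
    simp only [h2, h3]
    rw [← Finset.sum_mul]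
    congr 1
    have : (Fintype.card α : ℝ) ≠ 0 := by
      have : Nonempty α := ⟨a0⟩
      exact_mod_cast Fintype.card_ne_zero
    simp
    field_simp
  rw [key, key, h]
  ring

theorem card_full (m : ℕ) : ∑ a : Row m, (if full a then (1:ℝ) else 0) = 2 := by
  rw [Fintype.sum_prod_type]
  have : ∀ x : Fin m → Bool, (∀ j, x j = true) ↔ x = fun _ => true := by
    intro x
    constructor
    · intro h; funext j; exact h j
    · rintro rfl j; rfl
  simp only [full, this]
  simp

theorem card_row (m : ℕ) : ∑ a : Row m, (1:ℝ) = 2 * 2 ^ m := by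
  simp [Fintype.card_prod]
  ring

theorem sum_if_full (m : ℕ) (p q : ℝ) :
    ∑ a : Row m, (if full a then p else q) = 2 * p + 2 * (2 ^ m - 1) * q := by
  have h1 := card_full m
  have h2 := card_row m
  have : ∀ a : Row m, (if full a then p else q) =
      (p - q) * (if full a then (1:ℝ) else 0) + q * 1 := by
    intro a; split_ifs <;> ring
  simp only [this]
  rw [Finset.sum_add_distrib, ← Finset.mul_sum, ← Finset.mul_sum, h1, h2]
  ring

theorem prod_cnt {R : Type} [Fintype R] (P : R → Prop) [DecidablePred P] (p : ℝ) :
    ∏ t, (if P t then p else 1) = p ^ cnt P := by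
  unfold cnt
  rw [Finset.prod_ite]
  simp

theorem cnt_sum {R : Type} [Fintype R] (P : R → Prop) [DecidablePred P] :
    (cnt P : ℝ) = ∑ t, (if P t then (1:ℝ) else 0) := by
  unfold cnt
  simp

/-- the mass of one block -/
theorem block_mass {R : Type} [Fintype R] [DecidableEq R] (m : ℕ) :
    ∑ z : R → Row m, (cnt (fun t => full (z t)) : ℝ) * 2 ^ Fintype.card R / 2 ^ (cnt (fun t => full (z t)))
      = Fintype.card R * (2 * (2 * (2 ^ (m + 1) - 1)) ^ (Fintype.card R - 1)) := by
  have h1 : ∀ z : R → Row m, (cnt (fun t => full (z t)) : ℝ) * 2 ^ Fintype.card R / 2 ^ (cnt (fun t => full (z t)))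
      = ∑ i, ∏ t, (if t = i then (if full (z t) then (1:ℝ) else 0) else (if full (z t) then 1 else 2)) := by
    intro z
    rw [cnt_sum, mul_div_assoc, Finset.sum_mul]
    refine Finset.sum_congr rfl fun i _ => ?_
    have e2 : (2:ℝ) ^ Fintype.card R / 2 ^ (cnt (fun t => full (z t))) =
        ∏ t, (if full (z t) then (1:ℝ) else 2) := by
      rw [div_eq_iff (by positivity), ← prod_cnt, ← Finset.prod_mul_distrib]
      rw [Fintype.card, ← Finset.prod_const]
      refine Finset.prod_congr rfl fun t _ => ?_
      split_ifs <;> norm_num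
    rw [e2]
    rw [← Finset.mul_prod_erase univ _ (mem_univ i), ← Finset.mul_prod_erase univ _ (mem_univ i)]
    rw [if_pos rfl]
    rw [← mul_assoc]
    congr 1
    · split_ifs <;> simp
    · refine Finset.prod_congr rfl fun t ht => ?_
      rw [if_neg (Finset.ne_of_mem_erase ht)]
  simp only [h1]
  rw [Finset.sum_comm]
  have h2 : ∀ i : R, ∑ z : R → Row m, ∏ t, (if t = i then (if full (z t) then (1:ℝ) else 0) else (if full (z t) then 1 else 2))
      = 2 * (2 * (2 ^ (m + 1) - 1)) ^ (Fintype.card R - 1) := by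
    intro i
    rw [pi_prod (fun t a => (if t = i then (if full a then (1:ℝ) else 0) else (if full a then 1 else 2)))]
    rw [← Finset.mul_prod_erase univ _ (mem_univ i)]
    simp only [if_true]
    rw [sum_if_full]
    congr 1
    · ring
    · rw [Finset.prod_congr rfl (g := fun _ => (2 * (2 ^ (m + 1) - 1) : ℝ))]
      · rw [Finset.prod_const, Finset.card_erase_of_mem (mem_univ i)]; rfl
      · intro t ht
        simp only [if_neg (Finset.ne_of_mem_erase ht)]
        rw [sum_if_full]
        ring
  simp only [h2]
  simp

end UD

namespace UD

abbrev DRow (m : ℕ) := Bool × Bool × Row m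

def isF (m : ℕ) (u v : Bool) (a : DRow m) : Prop := full a.2.2 ∧ a.1 = u ∧ a.2.1 = v

instance {m : ℕ} (u v : Bool) : DecidablePred (isF m u v) := fun r => by unfold isF; infer_instance

def okR {m : ℕ} (a : DRow m) : Prop := full a.2.2 → (a.1 = false ∧ a.2.1 = false)

instance {m : ℕ} : DecidablePred (okR (m := m)) := fun r => by unfold okR; infer_instance

noncomputable def hh (r g : ℕ) : ℝ := 2 ^ g / (g * 2 ^ r)

theorem hh_nonneg (r g : ℕ) : 0 ≤ hh r g := by unfold hh; positivity

noncomputable def Ker (r n11 n10 n01 n00 r10 r01 : ℕ) : ℝ :=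
  (if n11 = 1 ∧ n10 = 0 ∧ n01 = 0 then hh r (n00 + 1) else 0) +
  (if n11 = 0 ∧ n10 = 0 ∧ n01 = 0 then ((r10 : ℝ) + r01) / 2 * hh r (n00 + 2) else 0)

theorem hh_le (r g : ℕ) : hh r (g + 2) / 2 ≤ hh r (g + 1) := by
  unfold hh
  rw [div_div, div_le_div_iff₀ (by positivity) (by positivity)]
  push_cast
  have : (0:ℝ) < 2 ^ g * 2 ^ r := by positivity
  rw [pow_add, pow_add]
  nlinarith

noncomputable def cW {m : ℕ} (a : DRow m) : ℝ :=
  if full a.2.2 then (if a.1 = true ∧ a.2.1 = true then 1 else 0) else (if a.1 ≠ a.2.1 then 1 else 0)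

theorem sum_drow (m : ℕ) (f : Bool → Bool → Bool → ℝ) :
    ∑ a : DRow m, f a.1 a.2.1 (decide (full a.2.2)) =
      ∑ x, ∑ y, (2 * f x y true + 2 * (2 ^ m - 1) * f x y false) := by
  rw [Fintype.sum_prod_type]
  refine Finset.sum_congr rfl fun x _ => ?_
  rw [Fintype.sum_prod_type]
  refine Finset.sum_congr rfl fun y _ => ?_
  rw [← sum_if_full]
  refine Finset.sum_congr rfl fun a _ => ?_
  by_cases h : full a <;> simp [h]

theorem sum_cW (m : ℕ) : ∑ a : DRow m, cW a = 2 * (2 ^ (m + 1) - 1) := by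
  have := sum_drow m (fun x y b => if b then (if x = true ∧ y = true then 1 else 0) else (if x ≠ y then 1 else 0))
  simp only [decide_eq_true_eq] at this
  unfold cW
  rw [this]
  simp
  ring

theorem sum_F00 (m : ℕ) : ∑ a : DRow m, (if isF m false false a then (1:ℝ) else 0) = 2 := by
  have := sum_drow m (fun x y b => if b = true ∧ x = false ∧ y = false then 1 else 0)
  simp only [decide_eq_true_eq] at this
  unfold isF
  rw [this]
  simp

theorem sum_e (m : ℕ) : ∑ a : DRow m, (if isF m false false a then (1:ℝ) else if full a.2.2 then 0 else 1/2)
    = 2 * (2 ^ (m + 1) - 1) := by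
  have := sum_drow m (fun x y b => if b = true ∧ x = false ∧ y = false then 1 else if b then 0 else 1/2)
  simp only [decide_eq_true_eq] at this
  unfold isF
  rw [this]
  simp
  ring

noncomputable def GG {R : Type} [Fintype R] [DecidableEq R] {m : ℕ} (i : R) (z : R → DRow m) : ℝ :=
  (∏ t ∈ univ.erase i, if okR (z t) then (1:ℝ) else 0) *
    hh (Fintype.card R) (cnt (fun t => t ≠ i ∧ isF m false false (z t)) + 1)

theorem ker_le {R : Type} [Fintype R] [DecidableEq R] {m : ℕ} (z : R → DRow m) :
    Ker (Fintype.card R) (cnt fun t => isF m true true (z t)) (cnt fun t => isF m true false (z t))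
      (cnt fun t => isF m false true (z t)) (cnt fun t => isF m false false (z t))
      (cnt fun t => (z t).1 = true ∧ (z t).2.1 = false) (cnt fun t => (z t).1 = false ∧ (z t).2.1 = true)
    ≤ ∑ i, cW (z i) * GG i z := by
  have hcW : ∀ a : DRow m, 0 ≤ cW a := by
    intro a; unfold cW; split_ifs <;> norm_num
  have hGG : ∀ i, 0 ≤ GG i z := by
    intro i; unfold GG
    refine mul_nonneg (Finset.prod_nonneg fun t _ => ?_) (hh_nonneg _ _)
    split_ifs <;> norm_num
  have hsum : 0 ≤ ∑ i, cW (z i) * GG i z :=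
    Finset.sum_nonneg fun i _ => mul_nonneg (hcW _) (hGG i)
  unfold Ker
  by_cases hA : cnt (fun t => isF m true false (z t)) = 0 ∧ cnt (fun t => isF m false true (z t)) = 0
  swap
  · rw [if_neg (fun h => hA h.2), if_neg (fun h => hA h.2)]
    simpa using hsum
  obtain ⟨h10, h01⟩ := hA
  have h10' := cnt_eq_zero.1 h10
  have h01' := cnt_eq_zero.1 h01
  by_cases h1 : cnt (fun t => isF m true true (z t)) = 1
  · rw [if_pos ⟨h1, h10, h01⟩, if_neg (by omega), add_zero]
    obtain ⟨i, hi⟩ := Finset.card_eq_one.1 h1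
    have hi1 : isF m true true (z i) := by
      have : i ∈ ({i} : Finset R) := Finset.mem_singleton_self i
      rw [← hi] at this
      simpa using this
    have hi2 : ∀ t, t ≠ i → ¬ isF m true true (z t) := by
      intro t ht h
      have : t ∈ ({i} : Finset R) := by rw [← hi]; simp [h]
      exact ht (Finset.mem_singleton.1 this)
    have hok : ∀ t, t ≠ i → okR (z t) := by
      intro t ht hf
      have a1 := h10' t
      have a2 := h01' t
      have a3 := hi2 t ht
      unfold isF at a1 a2 a3
      cases h1 : (z t).1 <;> cases h2 : (z t).2.1 <;> simp_all
    have e1 : cW (z i) * GG i z = hh (Fintype.card R) ((cnt fun t => isF m false false (z t)) + 1) := by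
      have : cW (z i) = 1 := by
        unfold cW
        rw [if_pos hi1.1, if_pos hi1.2]
      rw [this, one_mul]
      unfold GG
      rw [Finset.prod_eq_one, one_mul]
      · congr 2
        apply cnt_congr
        intro t
        constructor
        · exact fun h => h.2
        · intro h
          refine ⟨?_, h⟩
          rintro rfl
          have := h.2.1
          rw [hi1.2.1] at this
          exact absurd this (by simp)
      · intro t ht
        rw [if_pos (hok t (Finset.ne_of_mem_erase ht))]
    rw [← e1]
    exact Finset.single_le_sum (f := fun i => cW (z i) * GG i z)
      (fun i _ => mul_nonneg (hcW _) (hGG i)) (mem_univ i)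
  · by_cases h2 : cnt (fun t => isF m true true (z t)) = 0
    swap
    · rw [if_neg (by tauto), if_neg (by tauto)]
      simpa using hsum
    rw [if_neg (by tauto), if_pos ⟨h2, h10, h01⟩, zero_add]
    have h2' := cnt_eq_zero.1 h2
    have hok : ∀ t, okR (z t) := by
      intro t hf
      have a1 := h10' t
      have a2 := h01' t
      have a3 := h2' t
      unfold isF at a1 a2 a3
      cases h1 : (z t).1 <;> cases h2 : (z t).2.1 <;> simp_all
    have e1 : ∀ i, cW (z i) * GG i z =
        ((if (z i).1 = true ∧ (z i).2.1 = false then (1:ℝ) else 0) +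
         (if (z i).1 = false ∧ (z i).2.1 = true then (1:ℝ) else 0)) *
          hh (Fintype.card R) ((cnt fun t => isF m false false (z t)) + 1) := by
      intro i
      by_cases hf : full (z i).2.2
      · obtain ⟨b1, b2⟩ := hok i hf
        unfold cW
        simp [hf, b1, b2]
      · have e3 : cnt (fun t => t ≠ i ∧ isF m false false (z t)) = cnt fun t => isF m false false (z t) := by
          apply cnt_congr
          intro t
          constructor
          · exact fun h => h.2
          · intro h
            refine ⟨?_, h⟩
            rintro rfl
            exact hf h.1
        unfold GG
        rw [e3, Finset.prod_eq_one, one_mul]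
        · congr 1
          unfold cW
          rw [if_neg hf]
          cases h1 : (z i).1 <;> cases h2 : (z i).2.1 <;> simp
        · intro t ht
          rw [if_pos (hok t)]
    simp only [e1]
    rw [← Finset.sum_mul, Finset.sum_add_distrib, ← cnt_sum, ← cnt_sum]
    have := hh_le (Fintype.card R) (cnt fun t => isF m false false (z t))
    rw [div_mul_eq_mul_div, mul_div_assoc]
    exact mul_le_mul_of_nonneg_left this (by positivity)

theorem kernel_bound {R : Type} [Fintype R] [DecidableEq R] {m : ℕ} :
    ∑ z : R → DRow m, Ker (Fintype.card R) (cnt fun t => isF m true true (z t)) (cnt fun t => isF m true false (z t))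
      (cnt fun t => isF m false true (z t)) (cnt fun t => isF m false false (z t))
      (cnt fun t => (z t).1 = true ∧ (z t).2.1 = false) (cnt fun t => (z t).1 = false ∧ (z t).2.1 = true)
    ≤ (2 ^ (m + 1) - 1) * (2 * (2 ^ (m + 1) - 1)) ^ (Fintype.card R) := by
  refine (Finset.sum_le_sum fun z _ => ker_le z).trans ?_
  rw [Finset.sum_comm]
  have h1 : ∀ i : R, ∑ z : R → DRow m, cW (z i) * GG i z =
      (2 ^ (m + 1) - 1) * ∑ z : R → DRow m, (if isF m false false (z i) then (1:ℝ) else 0) * GG i z := by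
    intro i
    refine swap_coord i cW (fun a => if isF m false false a then (1:ℝ) else 0) _ ?_ (GG i) ?_
    · rw [sum_cW, sum_F00]; ring
    · intro z z' h
      unfold GG
      congr 1
      · refine Finset.prod_congr rfl fun t ht => ?_
        rw [h t (Finset.ne_of_mem_erase ht)]
      · congr 2
        apply cnt_congr
        intro t
        constructor
        · rintro ⟨h1, h2⟩; exact ⟨h1, by rw [← h t h1]; exact h2⟩
        · rintro ⟨h1, h2⟩; exact ⟨h1, by rw [h t h1]; exact h2⟩
  simp only [h1]
  rw [← Finset.mul_sum]
  have hA : (0:ℝ) ≤ 2 ^ (m + 1) - 1 := by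
    have : (1:ℝ) ≤ 2 ^ (m + 1) := one_le_pow₀ (by norm_num)
    linarith
  refine mul_le_mul_of_nonneg_left ?_ hA
  rw [Finset.sum_comm]
  have h2 : ∀ z : R → DRow m, ∑ i, (if isF m false false (z i) then (1:ℝ) else 0) * GG i z
      ≤ ∏ t, (if isF m false false (z t) then (1:ℝ) else if full (z t).2.2 then 0 else 1/2) := by
    intro z
    have h0 : 0 ≤ ∏ t, (if isF m false false (z t) then (1:ℝ) else if full (z t).2.2 then 0 else 1/2) := by
      refine Finset.prod_nonneg fun t _ => ?_
      split_ifs <;> norm_num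
    by_cases hok : ∀ t, okR (z t)
    swap
    · push Not at hok
      obtain ⟨s, hs⟩ := hok
      rw [Finset.sum_eq_zero]
      · exact h0
      intro i _
      by_cases hi : isF m false false (z i)
      · have hne : s ≠ i := by
          rintro rfl
          exact hs (fun _ => hi.2)
        unfold GG
        rw [Finset.prod_eq_zero (i := s)]
        · simp
        · simp [hne]
        · rw [if_neg hs]
      · rw [if_neg hi, zero_mul]
    set g := cnt fun t => isF m false false (z t) with hg
    have e1 : ∀ i, (if isF m false false (z i) then (1:ℝ) else 0) * GG i z =
        (if isF m false false (z i) then (1:ℝ) else 0) * hh (Fintype.card R) g := by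
      intro i
      by_cases hi : isF m false false (z i)
      · rw [if_pos hi, one_mul, one_mul]
        unfold GG
        rw [Finset.prod_eq_one (fun t _ => by rw [if_pos (hok t)]), one_mul]
        congr 1
        rw [hg, cnt_split (fun t => isF m false false (z t)) (fun t => t ≠ i)]
        congr 1
        · apply cnt_congr; intro t; tauto
        · symm
          unfold cnt
          rw [Finset.card_eq_one]
          refine ⟨i, ?_⟩
          ext t
          simp only [mem_filter, mem_univ, true_and, not_not, mem_singleton]
          constructor
          · exact fun h => h.2
          · rintro rfl; exact ⟨hi, rfl⟩
      · simp [hi]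
    simp only [e1]
    rw [← Finset.sum_mul, ← cnt_sum, ← hg]
    have e2 : ∏ t, (if isF m false false (z t) then (1:ℝ) else if full (z t).2.2 then 0 else 1/2) =
        2 ^ g / 2 ^ Fintype.card R := by
      rw [eq_div_iff (by positivity), hg, ← prod_cnt, Fintype.card, ← Finset.prod_const,
        ← Finset.prod_mul_distrib]
      refine Finset.prod_congr rfl fun t _ => ?_
      by_cases h : isF m false false (z t)
      · simp [h]
      · have : ¬ full (z t).2.2 := fun h' => h ⟨h', hok t h'⟩
        simp [h, this]
    rw [e2]
    unfold hh
    rcases Nat.eq_zero_or_pos g with h | h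
    · rw [h]; simp
    · have : (g:ℝ) ≠ 0 := by positivity
      apply le_of_eq
      field_simp
  refine (Finset.sum_le_sum fun z _ => h2 z).trans ?_
  rw [pi_prod (fun _ a => (if isF m false false a then (1:ℝ) else if full a.2.2 then 0 else 1/2)), sum_e]
  simp

end UD

namespace UD

def CoreStmt (m : ℕ) : Prop :=
  ∀ (T β : Type) [Fintype T] [DecidableEq T] [Fintype β] [DecidableEq β] (blk : T → β)
    (χ : (T → Row m) → ℝ), Cyl χ →
    |∑ Z : T → Row m, lam blk Z * χ Z| ≤
      (2 * (2 ^ m - 1)) ^ Fintype.card T * ∏ b, √(cnt (fun t => blk t = b) : ℝ)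

/-- glue two partial assignments -/
def glue {T α : Type} (p : T → Prop) [DecidablePred p] (u : {t // p t} → α) (v : {t // ¬ p t} → α) :
    T → α := fun t => if h : p t then u ⟨t, h⟩ else v ⟨t, h⟩

theorem sum_glue {T α : Type} [Fintype T] [DecidableEq T] [Fintype α] (p : T → Prop)
    [DecidablePred p] (g : (T → α) → ℝ) :
    ∑ Z, g Z = ∑ v, ∑ u, g (glue p u v) := by
  rw [← Fintype.sum_prod_type_right' (fun u v => g (glue p u v))]
  exact Fintype.sum_equiv (Equiv.piEquivPiSubtypeProd p (fun _ => α)) _ _ (fun Z => by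
    congr 1
    funext t
    by_cases h : p t <;> simp [glue, h])

theorem glue_pos {T α : Type} (p : T → Prop) [DecidablePred p] (u : {t // p t} → α)
    (v : {t // ¬ p t} → α) (s : {t // p t}) : glue p u v s.1 = u s := by
  simp [glue, s.2]

theorem glue_neg {T α : Type} (p : T → Prop) [DecidablePred p] (u : {t // p t} → α)
    (v : {t // ¬ p t} → α) (t : T) (h : ¬ p t) : glue p u v t = v ⟨t, h⟩ := by
  simp [glue, h]

theorem Cyl.glue {T : Type} {m : ℕ} {χ : (T → Row m) → ℝ} (h : Cyl χ) (p : T → Prop)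
    [DecidablePred p] (v : {t // ¬ p t} → Row m) : Cyl (fun u => χ (glue p u v)) := by
  obtain ⟨ψ, φ, h1, h2, h3, h4, h5⟩ := h
  refine ⟨fun u => ψ (UD.glue p u v), fun j u => φ j (UD.glue p u v), fun _ => h1 _, fun _ _ => h2 _ _,
    ?_, ?_, fun u => h5 _⟩
  · intro u u' h
    apply h3
    intro t
    by_cases ht : p t
    · simp [UD.glue, ht, h]
    · simp [UD.glue, ht]
  · intro j u u' h
    apply h4
    intro t
    by_cases ht : p t
    · simpa [UD.glue, ht] using h ⟨t, ht⟩
    · simp [UD.glue, ht]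

theorem split_bound {m : ℕ} (core : CoreStmt m) {T β : Type} [Fintype T] [DecidableEq T]
    [Fintype β] [DecidableEq β] (p : T → Prop) [DecidablePred p] (blk : {t // p t} → β)
    (c : (T → Row m) → ℝ) (hc : ∀ Z, 0 ≤ c Z)
    (hdep : ∀ Z Z', (∀ t, ¬ p t → Z t = Z' t) → c Z = c Z')
    (χ : (T → Row m) → ℝ) (hχ : Cyl χ) :
    |∑ Z, c Z * lam blk (fun s => Z s.1) * χ Z| ≤
      ∑ Z, c Z * (∏ s : {t // p t}, if full (Z s.1) then (0:ℝ) else 1) *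
        ∏ b, √(cnt (fun s => blk s = b) : ℝ) := by
  rw [sum_glue p, sum_glue p]
  refine (Finset.abs_sum_le_sum_abs _ _).trans (Finset.sum_le_sum fun v _ => ?_)
  let u0 : {t // p t} → Row m := fun _ => (fun _ => true, true)
  have hc0 : ∀ u, c (glue p u v) = c (glue p u0 v) := by
    intro u
    apply hdep
    intro t ht
    rw [glue_neg _ _ _ _ ht, glue_neg _ _ _ _ ht]
  simp only [hc0, glue_pos, mul_assoc]
  rw [← Finset.mul_sum, ← Finset.mul_sum, abs_mul, abs_of_nonneg (hc _)]
  refine mul_le_mul_of_nonneg_left ?_ (hc _)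
  refine (core _ _ blk _ (hχ.glue p v)).trans ?_
  rw [← Finset.sum_mul, pi_prod (fun _ (a : Row m) => if full a then (0:ℝ) else 1), sum_if_full]
  simp

/-- add a column -/
def comb {T : Type} {m : ℕ} (x : T → Bool) (Z : T → Row m) : T → Row (m + 1) :=
  fun t => (Fin.cons (x t) (Z t).1, (Z t).2)

theorem sum_comb {T : Type} [Fintype T] [DecidableEq T] {m : ℕ} (g : (T → Row (m + 1)) → ℝ) :
    ∑ Z, g Z = ∑ Z', ∑ x, g (comb x Z') := by
  rw [← Fintype.sum_prod_type_right' (fun x Z' => g (comb x Z'))]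
  symm
  refine Fintype.sum_equiv
    { toFun := fun q : (T → Bool) × (T → Row m) => comb q.1 q.2
      invFun := fun Z => (fun t => (Z t).1 0, fun t => (fun j => (Z t).1 j.succ, (Z t).2))
      left_inv := ?_
      right_inv := ?_ } _ _ (fun q => rfl)
  · intro q
    simp [comb]
  · intro Z
    funext t
    apply Prod.ext
    · funext j
      refine Fin.cases ?_ (fun j => ?_) j <;> simp [comb]
    · rfl

theorem full_comb {T : Type} {m : ℕ} (x : T → Bool) (Z : T → Row m) (t : T) :
    full (comb x Z t) ↔ full (Z t) ∧ x t = true := by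
  unfold full comb
  rw [Fin.forall_fin_succ]
  simp [and_comm]

theorem sgn_sq (b : Bool) : sgn b * sgn b = 1 := by cases b <;> simp [sgn]

def dcomb {T : Type} {m : ℕ} (x x' : T → Bool) (Z : T → Row m) : T → DRow m := fun t => (x t, x' t, Z t)

set_option linter.unusedSectionVars false
section identity
variable {T β : Type} [Fintype T] [DecidableEq T] [Fintype β] [DecidableEq β] {m : ℕ}

/-- count of full rows of given type in a block -/
def nF (blk : T → β) (z : T → DRow m) (u v : Bool) (b : β) : ℕ :=
  cnt (fun t => blk t = b ∧ isF m u v (z t))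

def tE (blk : T → β) (x x' : T → Bool) (E : Finset β) (t : T) : Prop := x t ≠ x' t ∧ blk t ∉ E

instance (blk : T → β) (x x' : T → Bool) (E : Finset β) : DecidablePred (tE blk x x' E) :=
  fun t => by unfold tE; infer_instance

def blkE (blk : T → β) (x x' : T → Bool) (E : Finset β) (s : {t // tE blk x x' E t}) :
    {b // b ∉ E} × Bool := (⟨blk s.1, s.2.2⟩, x s.1)

noncomputable def WW (blk : T → β) (Z : T → Row m) : ℝ :=
  ∏ b, ((cnt (fun t => blk t = b ∧ full (Z t)) : ℝ) * 2 ^ (cnt (fun t => blk t = b)) /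
    2 ^ (cnt (fun t => blk t = b ∧ full (Z t))))

noncomputable def cE (blk : T → β) (x x' : T → Bool) (E : Finset β) (Z : T → Row m) : ℝ :=
  (∏ b ∈ E, if nF blk (dcomb x x' Z) true true b = 1 ∧ nF blk (dcomb x x' Z) true false b = 0 ∧
      nF blk (dcomb x x' Z) false true b = 0 then
      hh (cnt (fun t => blk t = b)) (nF blk (dcomb x x' Z) false false b + 1) else 0) *
  ∏ b ∈ univ \ E, if nF blk (dcomb x x' Z) true true b = 0 then
      hh (cnt (fun t => blk t = b)) (nF blk (dcomb x x' Z) false false b + 2) else 0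

theorem nF_x (blk : T → β) (x x' : T → Bool) (Z : T → Row m) (b : β) :
    cnt (fun t => blk t = b ∧ full (comb x Z t)) =
      nF blk (dcomb x x' Z) true true b + nF blk (dcomb x x' Z) true false b := by
  rw [cnt_split _ (fun t => x' t = true)]
  unfold nF
  congr 1 <;> apply cnt_congr <;> intro t <;> simp [full_comb, isF, dcomb] <;> tauto

theorem nF_x' (blk : T → β) (x x' : T → Bool) (Z : T → Row m) (b : β) :
    cnt (fun t => blk t = b ∧ full (comb x' Z t)) =
      nF blk (dcomb x x' Z) true true b + nF blk (dcomb x x' Z) false true b := by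
  rw [cnt_split _ (fun t => x t = true)]
  unfold nF
  congr 1 <;> apply cnt_congr <;> intro t <;> simp [full_comb, isF, dcomb] <;> tauto

theorem nF_full (blk : T → β) (x x' : T → Bool) (Z : T → Row m) (b : β) :
    cnt (fun t => blk t = b ∧ full (Z t)) =
      nF blk (dcomb x x' Z) true true b + nF blk (dcomb x x' Z) true false b +
      (nF blk (dcomb x x' Z) false true b + nF blk (dcomb x x' Z) false false b) := by
  rw [cnt_split (fun t => blk t = b ∧ full (Z t)) (fun t => x t = true),
    cnt_split (fun t => (blk t = b ∧ full (Z t)) ∧ x t = true) (fun t => x' t = true),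
    cnt_split (fun t => (blk t = b ∧ full (Z t)) ∧ ¬ x t = true) (fun t => x' t = true)]
  unfold nF
  congr 1 <;> congr 1 <;> apply cnt_congr <;> intro t <;> simp [isF, dcomb] <;> tauto

theorem nb_blkE (blk : T → β) (x x' : T → Bool) (E : Finset β) (Z : T → Row m)
    (b : {b // b ∉ E}) (u : Bool) :
    cnt (fun s => blkE blk x x' E s = (b, u) ∧ full (Z s.1)) =
      nF blk (dcomb x x' Z) u (!u) b.1 := by
  have : ∀ s : {t // tE blk x x' E t}, (blkE blk x x' E s = (b, u) ∧ full (Z s.1)) ↔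
      (blk s.1 = b.1 ∧ x s.1 = u) ∧ full (Z s.1) := by
    intro s
    rw [blkE, Prod.ext_iff, Subtype.ext_iff]
  rw [cnt_congr this, cnt_subtype (tE blk x x' E) (fun t => (blk t = b.1 ∧ x t = u) ∧ full (Z t))]
  unfold nF
  apply cnt_congr
  intro t
  simp only [tE, isF, dcomb]
  constructor
  · rintro ⟨⟨h1, h2⟩, ⟨h3, h4⟩, h5⟩
    refine ⟨h3, h5, h4, ?_⟩
    rw [← h4]
    cases h6 : x t <;> cases h7 : x' t <;> simp_all
  · rintro ⟨h1, h2, h3, h4⟩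
    refine ⟨⟨?_, ?_⟩, ⟨h1, h3⟩, h2⟩
    · rw [h3, h4]; cases u <;> simp
    · rw [h1]; exact b.2

theorem r_blkE (blk : T → β) (x x' : T → Bool) (E : Finset β)
    (b : {b // b ∉ E}) (u : Bool) :
    cnt (fun s => blkE blk x x' E s = (b, u)) =
      cnt (fun t => blk t = b.1 ∧ x t = u ∧ x' t = !u) := by
  have : ∀ s : {t // tE blk x x' E t}, (blkE blk x x' E s = (b, u)) ↔
      (blk s.1 = b.1 ∧ x s.1 = u) := by
    intro s
    rw [blkE, Prod.ext_iff, Subtype.ext_iff]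
  rw [cnt_congr this, cnt_subtype (tE blk x x' E) (fun t => (blk t = b.1 ∧ x t = u))]
  apply cnt_congr
  intro t
  simp only [tE]
  constructor
  · rintro ⟨⟨h1, h2⟩, h3, h4⟩
    refine ⟨h3, h4, ?_⟩
    rw [← h4]
    cases h6 : x t <;> cases h7 : x' t <;> simp_all
  · rintro ⟨h1, h3, h4⟩
    refine ⟨⟨?_, ?_⟩, h1, h3⟩
    · rw [h3, h4]; cases u <;> simp
    · rw [h1]; exact b.2

theorem prod_pairs (E : Finset β) (f : β → Bool → ℝ) :
    ∏ q : {b // b ∉ E} × Bool, f q.1.1 q.2 = ∏ b ∈ univ \ E, (f b true * f b false) := by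
  rw [Fintype.prod_prod_type]
  simp only [Fintype.prod_bool]
  rw [Finset.prod_subtype (univ \ E) (p := fun b => b ∉ E) (by simp)]

theorem point_identity (blk : T → β) (x x' : T → Bool) (Z : T → Row m) :
    (WW blk Z)⁻¹ * (lam blk (comb x Z) * lam blk (comb x' Z)) =
      ∑ E ∈ univ.powerset, cE blk x x' E Z * lam (blkE blk x x' E) (fun s => Z s.1) := by
  have hs : (∏ t, if full (comb x Z t) then sgn (comb x Z t).2 else 1) *
      (∏ t, if full (comb x' Z t) then sgn (comb x' Z t).2 else 1) =
      ∏ t, if full (Z t) ∧ x t ≠ x' t then sgn (Z t).2 else 1 := by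
    rw [← Finset.prod_mul_distrib]
    refine Finset.prod_congr rfl fun t _ => ?_
    simp only [full_comb]
    by_cases hf : full (Z t) <;> cases hx : x t <;> cases hx' : x' t <;>
      simp [hf, comb, sgn_sq]
  have hb : (WW blk Z)⁻¹ * ((∏ b, if cnt (fun t => blk t = b ∧ full (comb x Z t)) = 1 then (1 : ℝ) else 0) *
      ∏ b, if cnt (fun t => blk t = b ∧ full (comb x' Z t)) = 1 then (1 : ℝ) else 0) =
      ∏ b, ((if nF blk (dcomb x x' Z) true true b = 1 ∧ nF blk (dcomb x x' Z) true false b = 0 ∧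
        nF blk (dcomb x x' Z) false true b = 0 then
        hh (cnt (fun t => blk t = b)) (nF blk (dcomb x x' Z) false false b + 1) else 0) +
        (if nF blk (dcomb x x' Z) true true b = 0 ∧ nF blk (dcomb x x' Z) true false b = 1 ∧
        nF blk (dcomb x x' Z) false true b = 1 then
        hh (cnt (fun t => blk t = b)) (nF blk (dcomb x x' Z) false false b + 2) else 0)) := by
    unfold WW
    rw [← Finset.prod_inv_distrib, ← Finset.prod_mul_distrib, ← Finset.prod_mul_distrib]
    refine Finset.prod_congr rfl fun b _ => ?_
    rw [nF_x blk x x', nF_x' blk x x', nF_full blk x x']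
    generalize nF blk (dcomb x x' Z) true true b = n11
    generalize nF blk (dcomb x x' Z) true false b = n10
    generalize nF blk (dcomb x x' Z) false true b = n01
    generalize nF blk (dcomb x x' Z) false false b = n00
    generalize cnt (fun t => blk t = b) = r
    by_cases h1 : n11 = 1 ∧ n10 = 0 ∧ n01 = 0
    · obtain ⟨rfl, rfl, rfl⟩ := h1
      simp [hh, add_comm]
    · by_cases h2 : n11 = 0 ∧ n10 = 1 ∧ n01 = 1
      · obtain ⟨rfl, rfl, rfl⟩ := h2
        have : 1 + (1 + n00) = n00 + 2 := by ring
        simp [hh, this]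
      · rw [if_neg h1, if_neg h2]
        have : ¬ (n11 + n10 = 1 ∧ n11 + n01 = 1) := by omega
        by_cases h3 : n11 + n10 = 1
        · rw [if_pos h3, if_neg (fun h => this ⟨h3, h⟩)]; simp
        · rw [if_neg h3]; simp
  have hl : lam blk (comb x Z) * lam blk (comb x' Z) =
    ((∏ b, if cnt (fun t => blk t = b ∧ full (comb x Z t)) = 1 then (1 : ℝ) else 0) *
      ∏ b, if cnt (fun t => blk t = b ∧ full (comb x' Z t)) = 1 then (1 : ℝ) else 0) *
     ∏ t, if full (Z t) ∧ x t ≠ x' t then sgn (Z t).2 else 1 := by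
    rw [← hs]; unfold lam; ring
  rw [hl, ← mul_assoc, hb, Finset.prod_add, Finset.sum_mul]
  refine Finset.sum_congr rfl fun E _ => ?_
  unfold cE lam
  have e1 : (∏ q : {b // b ∉ E} × Bool, if cnt (fun s => blkE blk x x' E s = q ∧ full (Z s.1)) = 1 then (1:ℝ) else 0)
      = ∏ b ∈ univ \ E, ((if nF blk (dcomb x x' Z) true false b = 1 then (1:ℝ) else 0) *
          (if nF blk (dcomb x x' Z) false true b = 1 then (1:ℝ) else 0)) := by
    have := prod_pairs E (fun b u => if nF blk (dcomb x x' Z) u (!u) b = 1 then (1:ℝ) else 0)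
    simp only [Bool.not_true, Bool.not_false] at this
    rw [← this]
    refine Finset.prod_congr rfl fun q _ => ?_
    obtain ⟨b, u⟩ := q
    rw [nb_blkE]
  rw [e1]
  rw [mul_assoc, mul_assoc, ← mul_assoc (∏ b ∈ univ \ E, _) (∏ b ∈ univ \ E, _), ← Finset.prod_mul_distrib]
  by_cases hz : ∀ b ∈ E, nF blk (dcomb x x' Z) true false b = 0 ∧ nF blk (dcomb x x' Z) false true b = 0
  · congr 1
    congr 1
    · refine Finset.prod_congr rfl fun b _ => ?_
      by_cases h1 : nF blk (dcomb x x' Z) true true b = 0 <;>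
      by_cases h2 : nF blk (dcomb x x' Z) true false b = 1 <;>
      by_cases h3 : nF blk (dcomb x x' Z) false true b = 1 <;> simp [h1, h2, h3]
    · rw [← Fintype.prod_subtype_mul_prod_subtype (tE blk x x' E)
        (fun t => if full (Z t) ∧ x t ≠ x' t then sgn (Z t).2 else 1)]
      rw [Finset.prod_eq_one (s := (univ : Finset {t // ¬ tE blk x x' E t})), mul_one]
      · refine Finset.prod_congr rfl fun s _ => ?_
        have := s.2.1
        by_cases hf : full (Z s.1) <;> simp [hf, this]
      · rintro ⟨t, ht⟩ _
        rw [if_neg]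
        rintro ⟨h1, h2⟩
        have hE : blk t ∈ E := by
          by_contra h3
          exact ht ⟨h2, h3⟩
        obtain ⟨h3, h4⟩ := hz _ hE
        have h3 := cnt_eq_zero.1 h3 t
        have h4 := cnt_eq_zero.1 h4 t
        simp only [isF, dcomb] at h3 h4
        cases h6 : x t <;> cases h7 : x' t <;> simp_all
  · push Not at hz
    obtain ⟨b, hbE, hb2⟩ := hz
    rw [Finset.prod_eq_zero (s := E) (i := b) hbE]
    · simp
    · rw [if_neg]
      rintro ⟨_, h2, h3⟩
      exact hb2 h2 h3

end identity
end UD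

namespace UD
set_option linter.unusedSectionVars false
section stepA
variable {T β : Type} [Fintype T] [DecidableEq T] [Fintype β] [DecidableEq β] {m : ℕ}

theorem cE_nonneg (blk : T → β) (x x' : T → Bool) (E : Finset β) (Z : T → Row m) :
    0 ≤ cE blk x x' E Z := by
  unfold cE
  refine mul_nonneg (Finset.prod_nonneg fun b _ => ?_) (Finset.prod_nonneg fun b _ => ?_)
  · split_ifs
    · exact hh_nonneg _ _
    · exact le_rfl
  · split_ifs
    · exact hh_nonneg _ _
    · exact le_rfl

theorem cE_dep (blk : T → β) (x x' : T → Bool) (E : Finset β) (Z Z' : T → Row m)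
    (h : ∀ t, ¬ tE blk x x' E t → Z t = Z' t) : cE blk x x' E Z = cE blk x x' E Z' := by
  have h1 : ∀ b ∈ E, ∀ u v, nF blk (dcomb x x' Z) u v b = nF blk (dcomb x x' Z') u v b := by
    intro b hb u v
    apply cnt_congr
    intro t
    refine and_congr_right fun ht => ?_
    have : Z t = Z' t := h t (fun h2 => h2.2 (ht ▸ hb))
    simp [dcomb, this]
  have h2 : ∀ b u, nF blk (dcomb x x' Z) u u b = nF blk (dcomb x x' Z') u u b := by
    intro b u
    apply cnt_congr
    intro t
    by_cases hx : x t = x' t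
    · have : Z t = Z' t := h t (fun h2 => h2.1 hx)
      simp [dcomb, this]
    · have : ∀ Z : T → Row m, ¬ isF m u u (dcomb x x' Z t) := by
        rintro Z ⟨_, h3, h4⟩
        exact hx (h3.trans h4.symm)
      simp [this]
  unfold cE
  congr 1
  · refine Finset.prod_congr rfl fun b hb => ?_
    rw [h1 b hb, h1 b hb, h1 b hb, h1 b hb]
  · refine Finset.prod_congr rfl fun b hb => ?_
    rw [h2, h2]

noncomputable def KerB (blk : T → β) (z : T → DRow m) (b : β) : ℝ :=
  Ker (cnt (fun t => blk t = b)) (nF blk z true true b) (nF blk z true false b)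
    (nF blk z false true b) (nF blk z false false b)
    (cnt (fun t => blk t = b ∧ (z t).1 = true ∧ (z t).2.1 = false))
    (cnt (fun t => blk t = b ∧ (z t).1 = false ∧ (z t).2.1 = true))

theorem sqrt_mul_le (a b : ℕ) : √(a:ℝ) * √(b:ℝ) ≤ ((a:ℝ) + b) / 2 := by
  have h1 := Real.sq_sqrt (Nat.cast_nonneg (α := ℝ) a)
  have h2 := Real.sq_sqrt (Nat.cast_nonneg (α := ℝ) b)
  nlinarith [sq_nonneg (√(a:ℝ) - √(b:ℝ))]

theorem term_le (blk : T → β) (x x' : T → Bool) (Z : T → Row m) (E : Finset β) :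
    cE blk x x' E Z * (∏ s : {t // tE blk x x' E t}, if full (Z s.1) then (0:ℝ) else 1) *
        ∏ q, √(cnt (fun s => blkE blk x x' E s = q) : ℝ) ≤
    (∏ b ∈ E, if nF blk (dcomb x x' Z) true true b = 1 ∧ nF blk (dcomb x x' Z) true false b = 0 ∧
      nF blk (dcomb x x' Z) false true b = 0 then
      hh (cnt (fun t => blk t = b)) (nF blk (dcomb x x' Z) false false b + 1) else 0) *
    ∏ b ∈ univ \ E, if nF blk (dcomb x x' Z) true true b = 0 ∧ nF blk (dcomb x x' Z) true false b = 0 ∧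
      nF blk (dcomb x x' Z) false true b = 0 then
      ((cnt (fun t => blk t = b ∧ x t = true ∧ x' t = false) : ℝ) +
        cnt (fun t => blk t = b ∧ x t = false ∧ x' t = true)) / 2 *
      hh (cnt (fun t => blk t = b)) (nF blk (dcomb x x' Z) false false b + 2) else 0 := by
  have hr : ∏ q, √(cnt (fun s => blkE blk x x' E s = q) : ℝ) =
      ∏ b ∈ univ \ E, (√(cnt (fun t => blk t = b ∧ x t = true ∧ x' t = false) : ℝ) *
        √(cnt (fun t => blk t = b ∧ x t = false ∧ x' t = true) : ℝ)) := by
    have := prod_pairs E (fun b u => √(cnt (fun t => blk t = b ∧ x t = u ∧ x' t = !u) : ℝ))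
    simp only [Bool.not_true, Bool.not_false] at this
    rw [← this]
    refine Finset.prod_congr rfl fun q _ => ?_
    obtain ⟨b, u⟩ := q
    rw [r_blkE]
  have hR : 0 ≤ (∏ b ∈ E, if nF blk (dcomb x x' Z) true true b = 1 ∧ nF blk (dcomb x x' Z) true false b = 0 ∧
      nF blk (dcomb x x' Z) false true b = 0 then
      hh (cnt (fun t => blk t = b)) (nF blk (dcomb x x' Z) false false b + 1) else 0) := by
    refine Finset.prod_nonneg fun b _ => ?_
    split_ifs
    · exact hh_nonneg _ _
    · exact le_rfl
  by_cases hf : ∃ s : {t // tE blk x x' E t}, full (Z s.1)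
  · obtain ⟨s, hs⟩ := hf
    rw [Finset.prod_eq_zero (mem_univ s) (by rw [if_pos hs])]
    rw [mul_zero, zero_mul]
    refine mul_nonneg hR (Finset.prod_nonneg fun b _ => ?_)
    split_ifs
    · exact mul_nonneg (by positivity) (hh_nonneg _ _)
    · exact le_rfl
  · push Not at hf
    rw [Finset.prod_eq_one (fun s _ => by rw [if_neg (hf s)]), mul_one, hr]
    unfold cE
    rw [mul_assoc, ← Finset.prod_mul_distrib]
    refine mul_le_mul_of_nonneg_left (Finset.prod_le_prod ?_ ?_) hR
    · intro b _
      refine mul_nonneg ?_ (by positivity)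
      split_ifs
      · exact hh_nonneg _ _
      · exact le_rfl
    · intro b hb
      have hbE : b ∉ E := by simpa using hb
      have h1 : nF blk (dcomb x x' Z) true false b = 0 := by
        have := nb_blkE blk x x' E Z ⟨b, hbE⟩ true
        rw [Bool.not_true] at this
        rw [← this, cnt_eq_zero]
        rintro s ⟨_, h⟩
        exact hf s h
      have h2 : nF blk (dcomb x x' Z) false true b = 0 := by
        have := nb_blkE blk x x' E Z ⟨b, hbE⟩ false
        rw [Bool.not_false] at this
        rw [← this, cnt_eq_zero]
        rintro s ⟨_, h⟩
        exact hf s h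
      simp only [h1, h2, and_true]
      split_ifs
      · rw [mul_comm]
        exact mul_le_mul_of_nonneg_right (sqrt_mul_le _ _) (hh_nonneg _ _)
      · simp

theorem pair_bound (core : CoreStmt m) (blk : T → β) (x x' : T → Bool)
    (Ψ : (T → Row m) → ℝ) (hΨ : Cyl Ψ) :
    ∑ Z, (WW blk Z)⁻¹ * (lam blk (comb x Z) * lam blk (comb x' Z)) * Ψ Z ≤
      ∑ Z : T → Row m, ∏ b, KerB blk (dcomb x x' Z) b := by
  simp only [point_identity, Finset.sum_mul]
  rw [Finset.sum_comm]
  have : ∀ Z : T → Row m, ∏ b, KerB blk (dcomb x x' Z) b = ∑ E ∈ univ.powerset, (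
    (∏ b ∈ E, if nF blk (dcomb x x' Z) true true b = 1 ∧ nF blk (dcomb x x' Z) true false b = 0 ∧
      nF blk (dcomb x x' Z) false true b = 0 then
      hh (cnt (fun t => blk t = b)) (nF blk (dcomb x x' Z) false false b + 1) else 0) *
    ∏ b ∈ univ \ E, if nF blk (dcomb x x' Z) true true b = 0 ∧ nF blk (dcomb x x' Z) true false b = 0 ∧
      nF blk (dcomb x x' Z) false true b = 0 then
      ((cnt (fun t => blk t = b ∧ x t = true ∧ x' t = false) : ℝ) +
        cnt (fun t => blk t = b ∧ x t = false ∧ x' t = true)) / 2 *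
      hh (cnt (fun t => blk t = b)) (nF blk (dcomb x x' Z) false false b + 2) else 0) := by
    intro Z
    rw [← Finset.prod_add]
    rfl
  simp only [this]
  rw [Finset.sum_comm (s := univ) (t := univ.powerset)]
  refine Finset.sum_le_sum fun E _ => ?_
  refine (le_abs_self _).trans ((split_bound core (tE blk x x' E) (blkE blk x x' E) (cE blk x x' E)
    (cE_nonneg blk x x' E) (cE_dep blk x x' E) Ψ hΨ).trans ?_)
  exact Finset.sum_le_sum fun Z _ => term_le blk x x' Z E

theorem kerB_restrict (blk : T → β) (z : T → DRow m) (b : β) :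
    KerB blk z b = Ker (Fintype.card {t // blk t = b})
      (cnt (fun s : {t // blk t = b} => isF m true true (z s.1)))
      (cnt (fun s : {t // blk t = b} => isF m true false (z s.1)))
      (cnt (fun s : {t // blk t = b} => isF m false true (z s.1)))
      (cnt (fun s : {t // blk t = b} => isF m false false (z s.1)))
      (cnt (fun s : {t // blk t = b} => (z s.1).1 = true ∧ (z s.1).2.1 = false))
      (cnt (fun s : {t // blk t = b} => (z s.1).1 = false ∧ (z s.1).2.1 = true)) := by
  unfold KerB nF
  rw [cnt_subtype (fun t => blk t = b) (fun t => isF m true true (z t)),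
    cnt_subtype (fun t => blk t = b) (fun t => isF m true false (z t)),
    cnt_subtype (fun t => blk t = b) (fun t => isF m false true (z t)),
    cnt_subtype (fun t => blk t = b) (fun t => isF m false false (z t)),
    cnt_subtype (fun t => blk t = b) (fun t => (z t).1 = true ∧ (z t).2.1 = false),
    cnt_subtype (fun t => blk t = b) (fun t => (z t).1 = false ∧ (z t).2.1 = true),
    Fintype.card_subtype]
  rfl

theorem ker_nonneg (r n11 n10 n01 n00 r10 r01 : ℕ) : 0 ≤ Ker r n11 n10 n01 n00 r10 r01 := by
  unfold Ker
  have := hh_nonneg r (n00+1)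
  have := hh_nonneg r (n00+2)
  split_ifs <;> positivity

theorem sum_kerB (blk : T → β) :
    ∑ z : T → DRow m, ∏ b, KerB blk z b ≤
      ∏ b, ((2 ^ (m + 1) - 1) * (2 * (2 ^ (m + 1) - 1)) ^ cnt (fun t => blk t = b) : ℝ) := by
  simp only [kerB_restrict]
  rw [fiber_prod blk (fun b z => Ker (Fintype.card {t // blk t = b})
      (cnt (fun s : {t // blk t = b} => isF m true true (z s)))
      (cnt (fun s : {t // blk t = b} => isF m true false (z s)))
      (cnt (fun s : {t // blk t = b} => isF m false true (z s)))
      (cnt (fun s : {t // blk t = b} => isF m false false (z s)))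
      (cnt (fun s : {t // blk t = b} => (z s).1 = true ∧ (z s).2.1 = false))
      (cnt (fun s : {t // blk t = b} => (z s).1 = false ∧ (z s).2.1 = true)))]
  refine Finset.prod_le_prod (fun b _ => Finset.sum_nonneg fun z _ => ker_nonneg _ _ _ _ _ _ _) fun b _ => ?_
  refine (kernel_bound (R := {t // blk t = b}) (m := m)).trans ?_
  rw [Fintype.card_subtype]
  rfl

theorem sum_dcomb (g : (T → DRow m) → ℝ) :
    ∑ x, ∑ x', ∑ Z, g (dcomb x x' Z) = ∑ z, g z := by
  simp only [← Fintype.sum_prod_type']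
  refine Fintype.sum_equiv
    { toFun := fun q : (T → Bool) × (T → Bool) × (T → Row m) => dcomb q.1 q.2.1 q.2.2
      invFun := fun z => (fun t => (z t).1, fun t => (z t).2.1, fun t => (z t).2.2)
      left_inv := fun q => rfl
      right_inv := fun z => rfl } _ _ (fun q => rfl)

theorem sum_WW (blk : T → β) :
    ∑ Z : T → Row m, WW blk Z = ∏ b, ((cnt (fun t => blk t = b) : ℝ) *
      (2 * (2 * (2 ^ (m + 1) - 1)) ^ (cnt (fun t => blk t = b) - 1))) := by
  have h : ∀ b, Fintype.card {t // blk t = b} = cnt (fun t => blk t = b) := fun b => by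
    rw [Fintype.card_subtype]; rfl
  have : ∀ Z : T → Row m, WW blk Z = ∏ b, ((cnt (fun s : {t // blk t = b} => full (Z s.1)) : ℝ) *
     2 ^ Fintype.card {t // blk t = b} / 2 ^ (cnt (fun s : {t // blk t = b} => full (Z s.1)))) := by
    intro Z
    unfold WW
    refine Finset.prod_congr rfl fun b _ => ?_
    rw [cnt_subtype (fun t => blk t = b) (fun t => full (Z t)), h]
  simp only [this]
  rw [fiber_prod blk (fun b z => ((cnt (fun s : {t // blk t = b} => full (z s)) : ℝ) *
     2 ^ Fintype.card {t // blk t = b} / 2 ^ (cnt (fun s : {t // blk t = b} => full (z s)))))]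
  refine Finset.prod_congr rfl fun b _ => ?_
  rw [block_mass, h]

end stepA
end UD

namespace UD
set_option linter.unusedSectionVars false

theorem WW_nonneg {T β : Type} [Fintype T] [DecidableEq T] [Fintype β] [DecidableEq β] {m : ℕ}
    (blk : T → β) (Z : T → Row m) : 0 ≤ WW blk Z := by
  unfold WW
  exact Finset.prod_nonneg fun b _ => by positivity

theorem lam_of_WW {T β : Type} [Fintype T] [DecidableEq T] [Fintype β] [DecidableEq β] {m : ℕ}
    (blk : T → β) (Z : T → Row m) (h : WW blk Z = 0) (x : T → Bool) : lam blk (comb x Z) = 0 := by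
  unfold WW at h
  rw [Finset.prod_eq_zero_iff] at h
  obtain ⟨b, -, hb⟩ := h
  have hb : cnt (fun t => blk t = b ∧ full (Z t)) = 0 := by
    by_contra h0
    have : (0:ℝ) < cnt (fun t => blk t = b ∧ full (Z t)) := by
      exact_mod_cast Nat.pos_of_ne_zero h0
    have : (0:ℝ) < (cnt (fun t => blk t = b ∧ full (Z t)) : ℝ) * 2 ^ (cnt (fun t => blk t = b)) /
      2 ^ (cnt (fun t => blk t = b ∧ full (Z t))) := by positivity
    exact this.ne' hb
  unfold lam
  rw [Finset.prod_eq_zero (mem_univ b), zero_mul]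
  have : cnt (fun t => blk t = b ∧ full (comb x Z t)) = 0 := by
    rw [cnt_eq_zero] at hb ⊢
    intro t ht
    exact hb t ⟨ht.1, ((full_comb x Z t).1 ht.2).1⟩
  rw [this]; simp

theorem abs_prod_le_one {ι : Type} (s : Finset ι) (f : ι → ℝ) (h : ∀ i ∈ s, |f i| ≤ 1) :
    |∏ i ∈ s, f i| ≤ 1 := by
  rw [Finset.abs_prod]
  exact Finset.prod_le_one (fun i _ => abs_nonneg _) h

theorem core_zero : CoreStmt 0 := by
  intro T β _ _ _ _ blk χ hχ
  obtain ⟨ψ, φ, h1, h2, h3, h4, h5⟩ := hχ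
  have hfull : ∀ r : Row 0, full r := fun r j => j.elim0
  rcases isEmpty_or_nonempty T with hT | ⟨⟨t0⟩⟩
  · rcases isEmpty_or_nonempty β with hβ | ⟨⟨b0⟩⟩
    · have : ∀ Z, χ Z = ψ Z := by intro Z; rw [h5]; simp
      simp [lam, this, h1]
    · have : ∀ Z : T → Row 0, lam blk Z = 0 := by
        intro Z
        unfold lam
        rw [Finset.prod_eq_zero (mem_univ b0), zero_mul]
        have : cnt (fun t => blk t = b0 ∧ full (Z t)) = 0 := by
          rw [cnt_eq_zero]; intro t; exact hT.elim t
        rw [this]; simp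
      simp only [this, zero_mul, Finset.sum_const_zero, abs_zero]
      refine mul_nonneg (by simp) (Finset.prod_nonneg fun b _ => Real.sqrt_nonneg _)
  · have hs : ∑ Z : T → Row 0, lam blk Z * χ Z = 0 := by
      have e : ∀ Z : T → Row 0, lam blk Z * χ Z =
          ((∏ b, if cnt (fun t => blk t = b) = 1 then (1 : ℝ) else 0) *
            ψ (fun _ => (fun _ => true, true))) * ∏ t, sgn (Z t).2 := by
        intro Z
        rw [h5, h3 Z (fun _ => (fun _ => true, true)) (fun t => by funext j; exact j.elim0)]
        simp only [lam, hfull, and_true, if_true, Finset.univ_eq_empty, Finset.prod_empty]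
        ring
      simp only [e]
      rw [← Finset.mul_sum, pi_prod (fun _ (a : Row 0) => sgn a.2),
        Finset.prod_eq_zero (mem_univ t0), mul_zero]
      rw [Fintype.sum_prod_type]
      simp [sgn]
    rw [hs, abs_zero]
    refine mul_nonneg (by norm_num) (Finset.prod_nonneg fun b _ => Real.sqrt_nonneg _)

theorem core_step {m : ℕ} (core : CoreStmt m) : CoreStmt (m + 1) := by
  intro T β _ _ _ _ blk χ hχ
  obtain ⟨ψ, φ, h1, h2, h3, h4, h5⟩ := hχ
  set A : ℝ := 2 ^ (m + 1) - 1 with hA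
  have hA0 : 0 ≤ A := by
    have : (1:ℝ) ≤ 2 ^ (m + 1) := one_le_pow₀ (by norm_num)
    linarith
  let G : (T → Row (m + 1)) → ℝ := fun Z => ψ Z * ∏ j : Fin m, φ j.succ Z
  let I : (T → Row m) → ℝ := fun Z => ∑ x, lam blk (comb x Z) * G (comb x Z)
  have hS : |∑ Z, lam blk Z * χ Z| ≤ ∑ Z, |I Z| := by
    rw [sum_comb]
    refine (Finset.abs_sum_le_sum_abs _ _).trans (Finset.sum_le_sum fun Z _ => ?_)
    have : ∑ x, lam blk (comb x Z) * χ (comb x Z) = φ 0 (comb (fun _ => false) Z) * I Z := by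
      rw [Finset.mul_sum]
      refine Finset.sum_congr rfl fun x _ => ?_
      rw [h5, Fin.prod_univ_succ, h4 0 (comb x Z) (comb (fun _ => false) Z)]
      · simp only [G]; ring
      · intro t
        refine ⟨rfl, fun j' hj' => ?_⟩
        obtain ⟨j, rfl⟩ := Fin.exists_succ_eq.2 hj'
        simp [comb]
    rw [this, abs_mul]
    exact mul_le_of_le_one_left (abs_nonneg _) (h2 _ _)
  have hCS : (∑ Z, |I Z|) ^ 2 ≤ (∑ Z : T → Row m, WW blk Z) * ∑ Z, (WW blk Z)⁻¹ * I Z ^ 2 := by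
    refine Finset.sum_sq_le_sum_mul_sum_of_sq_le_mul _ (fun Z _ => WW_nonneg blk Z)
      (fun Z _ => mul_nonneg (inv_nonneg.2 (WW_nonneg blk Z)) (sq_nonneg _)) (fun Z _ => le_of_eq ?_)
    rw [sq_abs]
    by_cases hW : WW blk Z = 0
    · have : I Z = 0 := by
        simp only [I, lam_of_WW blk Z hW, zero_mul, Finset.sum_const_zero]
      rw [this]; simp
    · rw [← mul_assoc, mul_inv_cancel₀ hW, one_mul]
  have hQ : ∑ Z, (WW blk Z)⁻¹ * I Z ^ 2 ≤ ∏ b, (A * (2 * A) ^ cnt (fun t => blk t = b)) := by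
    refine le_trans ?_ (sum_kerB (m := m) blk)
    rw [← sum_dcomb]
    have e : ∑ Z, (WW blk Z)⁻¹ * I Z ^ 2 = ∑ x, ∑ x', ∑ Z, (WW blk Z)⁻¹ *
        (lam blk (comb x Z) * lam blk (comb x' Z)) * (G (comb x Z) * G (comb x' Z)) := by
      have : ∀ Z, (WW blk Z)⁻¹ * I Z ^ 2 = ∑ x, ∑ x', (WW blk Z)⁻¹ *
        (lam blk (comb x Z) * lam blk (comb x' Z)) * (G (comb x Z) * G (comb x' Z)) := by
        intro Z
        rw [sq, Finset.sum_mul_sum, Finset.mul_sum]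
        refine Finset.sum_congr rfl fun x _ => ?_
        rw [Finset.mul_sum]
        refine Finset.sum_congr rfl fun x' _ => ?_
        ring
      simp only [this]
      rw [Finset.sum_comm]
      refine Finset.sum_congr rfl fun x _ => ?_
      rw [Finset.sum_comm]
    rw [e]
    refine Finset.sum_le_sum fun x _ => Finset.sum_le_sum fun x' _ => ?_
    refine pair_bound core blk x x' (fun Z => G (comb x Z) * G (comb x' Z)) ?_
    refine ⟨fun Z => ψ (comb x Z) * ψ (comb x' Z), fun j Z => φ j.succ (comb x Z) * φ j.succ (comb x' Z),
      ?_, ?_, ?_, ?_, ?_⟩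
    · intro Z
      rw [abs_mul]; exact mul_le_one₀ (h1 _) (abs_nonneg _) (h1 _)
    · intro j Z
      rw [abs_mul]; exact mul_le_one₀ (h2 _ _) (abs_nonneg _) (h2 _ _)
    · intro Z Z' h
      have : ∀ x, ψ (comb x Z) = ψ (comb x Z') := fun x => h3 _ _ fun t => by simp [comb, h]
      simp only [this]
    · intro j Z Z' h
      have : ∀ x, φ j.succ (comb x Z) = φ j.succ (comb x Z') := fun x => h4 _ _ _ fun t => by
        refine ⟨(h t).1, fun j' => ?_⟩
        refine Fin.cases (fun _ => ?_) (fun j' hj' => ?_) j'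
        · simp [comb]
        · simpa [comb] using (h t).2 j' (fun e => hj' (by rw [e]))
      simp only [this]
    · intro Z
      simp only [G, Finset.prod_mul_distrib]
      ring
  have hT : Fintype.card T = ∑ b, cnt (fun t => blk t = b) := by
    unfold cnt
    rw [← Finset.card_eq_sum_card_fiberwise (f := blk) (s := univ) (t := univ) (fun _ _ => by simp)]
    rfl
  have hW : (∑ Z : T → Row m, WW blk Z) * ∏ b, (A * (2 * A) ^ cnt (fun t => blk t = b)) =
      ((2 * A) ^ Fintype.card T * ∏ b, √(cnt (fun t => blk t = b) : ℝ)) ^ 2 := by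
    rw [sum_WW, ← hA, hT, ← Finset.prod_pow_eq_pow_sum, ← Finset.prod_mul_distrib, ← Finset.prod_mul_distrib,
      ← Finset.prod_pow]
    refine Finset.prod_congr rfl fun b _ => ?_
    rw [mul_pow ((2 * A) ^ _) _ 2, Real.sq_sqrt (Nat.cast_nonneg _)]
    generalize cnt (fun t => blk t = b) = r
    rcases r with _ | r
    · simp
    · rw [Nat.add_sub_cancel]; ring
  have hfin : |∑ Z, lam blk Z * χ Z| ^ 2 ≤
      ((2 * A) ^ Fintype.card T * ∏ b, √(cnt (fun t => blk t = b) : ℝ)) ^ 2 := by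
    rw [← hW]
    refine (pow_le_pow_left₀ (abs_nonneg _) hS 2).trans (hCS.trans ?_)
    exact mul_le_mul_of_nonneg_left hQ (Finset.sum_nonneg fun Z _ => WW_nonneg blk Z)
  refine le_of_sq_le_sq hfin ?_
  exact mul_nonneg (by positivity) (Finset.prod_nonneg fun b _ => Real.sqrt_nonneg _)

theorem core_all (m : ℕ) : CoreStmt m := by
  induction m with
  | zero => exact core_zero
  | succ m ih => exact core_step ih

end UD

namespace UD
set_option linter.unusedSectionVars false

/-- block weight -/
noncomputable def bw {R : Type} [Fintype R] {q : ℕ} (N : (Fin q → Bool) → Prop) [DecidablePred N]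
    (f : Bool → ℝ) (z : R → Row q) : ℝ :=
  (if cnt (fun t => full (z t)) = 1 then (1:ℝ) else 0) *
    ∏ t, (if full (z t) then f (z t).2 else if N (z t).1 then 1 else 0)

def gS {q : ℕ} (S : Finset (Fin q)) (a : Row q) : Prop := ∀ j, j ∉ S → a.1 j = true

instance {q : ℕ} (S : Finset (Fin q)) : DecidablePred (gS S) := fun a => by unfold gS; infer_instance

noncomputable def sb {R : Type} [Fintype R] {q : ℕ} (N : (Fin q → Bool) → Prop) [DecidablePred N]
    (S : Finset (Fin q)) (z : R → Row q) : ℝ :=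
  (∏ t, if N (z t).1 then (1:ℝ) else 0) * √(cnt (fun t => gS S (z t)) : ℝ)

abbrev res {T β α : Type} (blk : T → β) (b : β) (Z : T → α) : {t // blk t = b} → α := fun s => Z s.1

def f0 (y : Bool) : ℝ := if y then 0 else 1
def f1 (y : Bool) : ℝ := if y then 1 else 0

/-- assemble a row from columns inside and outside `S` -/
noncomputable def mk {q : ℕ} (S : Finset (Fin q)) (u : {j // j ∉ S} → Bool) (v : Row S.card) : Row q :=
  (fun j => if h : j ∈ S then v.1 (S.equivFin ⟨j, h⟩) else u ⟨j, h⟩, v.2)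

theorem sum_mk {T : Type} [Fintype T] [DecidableEq T] {q : ℕ} (S : Finset (Fin q))
    (g : (T → Row q) → ℝ) :
    ∑ Z, g Z = ∑ u : T → ({j // j ∉ S} → Bool), ∑ V : T → Row S.card, g (fun t => mk S (u t) (V t)) := by
  rw [← Fintype.sum_prod_type' (fun (u : T → ({j // j ∉ S} → Bool)) (V : T → Row S.card) => g (fun t => mk S (u t) (V t)))]
  symm
  refine Fintype.sum_equiv
    { toFun := fun p : (T → ({j // j ∉ S} → Bool)) × (T → Row S.card) => fun t => mk S (p.1 t) (p.2 t)
      invFun := fun Z => (fun t j => (Z t).1 j.1, fun t => (fun i => (Z t).1 (S.equivFin.symm i).1, (Z t).2))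
      left_inv := ?_
      right_inv := ?_ } _ _ (fun p => rfl)
  · rintro ⟨u, V⟩
    simp only [Prod.mk.injEq]
    constructor
    · funext t j
      simp [mk, j.2]
    · funext t
      apply Prod.ext
      · funext i
        simp [mk]
      · rfl
  · intro Z
    funext t
    apply Prod.ext
    · funext j
      by_cases h : j ∈ S <;> simp [mk]
    · rfl

theorem full_mk {q : ℕ} (S : Finset (Fin q)) (u : {j // j ∉ S} → Bool) (v : Row S.card) :
    full (mk S u v) ↔ full v ∧ ∀ j, u j = true := by
  unfold full mk
  constructor
  · intro h
    constructor
    · intro i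
      have := h (S.equivFin.symm i).1
      simpa using this
    · intro j
      have := h j.1
      simpa [j.2] using this
  · rintro ⟨h1, h2⟩ j
    by_cases h : j ∈ S <;> simp [h, h1, h2]

theorem gS_mk {q : ℕ} (S : Finset (Fin q)) (u : {j // j ∉ S} → Bool) (v : Row S.card) :
    gS S (mk S u v) ↔ ∀ j, u j = true := by
  unfold gS mk
  constructor
  · intro h j
    simpa [j.2] using h j.1 j.2
  · intro h j hj
    simp [hj, h]

theorem prod_sub {T : Type} [Fintype T] (p : T → Prop) [DecidablePred p] (f : T → ℝ) :
    ∏ s : {t // p t}, f s.1 = ∏ t, if p t then f t else 1 := by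
  rw [← Finset.prod_filter]
  exact (Finset.prod_subtype _ (by simp) _).symm

theorem prod_blocks {T β : Type} [Fintype T] [DecidableEq T] [Fintype β] [DecidableEq β]
    (blk : T → β) (A : Finset β) (f : T → ℝ) :
    ∏ b ∈ A, ∏ s : {t // blk t = b}, f s.1 = ∏ t, if blk t ∈ A then f t else 1 := by
  have : ∀ b, ∏ s : {t // blk t = b}, f s.1 = ∏ t, if blk t = b then f t else 1 := by
    intro b
    rw [← Finset.prod_filter]
    exact (Finset.prod_subtype _ (by simp) _).symm
  simp only [this]
  rw [Finset.prod_comm]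
  refine Finset.prod_congr rfl fun t _ => ?_
  rw [Finset.prod_ite_eq]

section disc
variable {T β : Type} [Fintype T] [DecidableEq T] [Fintype β] [DecidableEq β] {q : ℕ}

theorem bw_nonneg {R : Type} [Fintype R] (N : (Fin q → Bool) → Prop) [DecidablePred N]
    (f : Bool → ℝ) (hf : ∀ y, 0 ≤ f y) (z : R → Row q) : 0 ≤ bw N f z := by
  unfold bw
  refine mul_nonneg (by split_ifs <;> norm_num) (Finset.prod_nonneg fun t _ => ?_)
  split_ifs
  · exact hf _
  · norm_num
  · exact le_rfl

theorem f0_nonneg (y : Bool) : 0 ≤ f0 y := by cases y <;> simp [f0]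
theorem f1_nonneg (y : Bool) : 0 ≤ f1 y := by cases y <;> simp [f1]

theorem disc (blk : T → β) (N : (Fin q → Bool) → Prop) [DecidablePred N] (S : Finset (Fin q))
    (hN1 : ∀ M, N M → ∃ j, M j = false)
    (hN2 : ∀ M, (∃ j, M j = false) → (∀ j, j ∉ S → M j = true) → N M)
    (ψ : (T → Row q) → ℝ) (φ : Fin q → (T → Row q) → ℝ)
    (h1 : ∀ Z, |ψ Z| ≤ 1) (h2 : ∀ j ∈ S, ∀ Z, |φ j Z| ≤ 1)
    (h3 : ∀ Z Z', (∀ t, (Z t).1 = (Z' t).1) → ψ Z = ψ Z')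
    (h4 : ∀ j ∈ S, ∀ Z Z', (∀ t, (Z t).2 = (Z' t).2 ∧ ∀ j', j' ≠ j → (Z t).1 j' = (Z' t).1 j') →
      φ j Z = φ j Z') (A : Finset β) :
    |∑ Z : T → Row q, (ψ Z * ∏ j ∈ S, φ j Z) * ((∏ b ∈ A, bw N sgn (res blk b Z)) *
        ∏ b ∈ univ \ A, bw N f0 (res blk b Z))| ≤
      ∑ Z : T → Row q, (∏ b ∈ A, sb N S (res blk b Z)) * ∏ b ∈ univ \ A, bw N f0 (res blk b Z) := by
  rw [sum_mk S, sum_mk S]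
  refine (Finset.abs_sum_le_sum_abs _ _).trans (Finset.sum_le_sum fun u _ => ?_)
  let p : T → Prop := fun t => blk t ∈ A ∧ ∀ j, u t j = true
  have : DecidablePred p := fun t => by unfold p; infer_instance
  let blk' : {t // p t} → {b // b ∈ A} := fun s => ⟨blk s.1, s.2.1⟩
  let c : (T → Row S.card) → ℝ := fun V =>
    (∏ t, if (blk t ∈ A ∧ ¬ p t) then (if N (mk S (u t) (V t)).1 then (1:ℝ) else 0) else 1) *
      ∏ b ∈ univ \ A, bw N f0 (res blk b (fun t => mk S (u t) (V t)))
  have hc : ∀ V, 0 ≤ c V := by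
    intro V
    refine mul_nonneg (Finset.prod_nonneg fun t _ => by split_ifs <;> norm_num)
      (Finset.prod_nonneg fun b _ => bw_nonneg _ _ f0_nonneg _)
  have hdep : ∀ V V', (∀ t, ¬ p t → V t = V' t) → c V = c V' := by
    intro V V' h
    simp only [c]
    congr 1
    · refine Finset.prod_congr rfl fun t _ => ?_
      by_cases hp : p t
      · simp [hp]
      · rw [h t hp]
    · refine Finset.prod_congr rfl fun b hb => ?_
      congr 1
      funext s
      have : ¬ p s.1 := fun hp => by
        have := hp.1
        rw [s.2] at this
        simp [this] at hb
      simp only [res]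
      rw [h _ this]
  have hcyl : Cyl (fun V : T → Row S.card => (ψ (fun t => mk S (u t) (V t)) *
      ∏ j ∈ S, φ j (fun t => mk S (u t) (V t)))) := by
    refine ⟨fun V => ψ (fun t => mk S (u t) (V t)),
      fun i V => φ (S.equivFin.symm i).1 (fun t => mk S (u t) (V t)), fun _ => h1 _,
      fun i _ => h2 _ (S.equivFin.symm i).2 _, ?_, ?_, ?_⟩
    · intro V V' h
      apply h3
      intro t
      simp [mk, h]
    · intro i V V' h
      apply h4 _ (S.equivFin.symm i).2
      intro t
      refine ⟨(h t).1, fun j' hj' => ?_⟩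
      by_cases hS : j' ∈ S
      · simp only [mk, hS, dif_pos]
        apply (h t).2
        intro e
        apply hj'
        rw [← e]; simp
      · simp [mk, hS]
    · intro V
      dsimp only
      congr 1
      rw [Finset.prod_subtype S (p := fun j => j ∈ S) (by simp)]
      exact (Equiv.prod_comp S.equivFin.symm (fun j : {j // j ∈ S} => φ j.1 (fun t => mk S (u t) (V t)))).symm
  have key := split_bound (core_all S.card) p blk' c hc hdep _ hcyl
  have hNp : ∀ t v, p t → (N (mk S (u t) v).1 ↔ ¬ full v) := by
    intro t v hp
    constructor
    · intro hN hf
      obtain ⟨j, hj⟩ := hN1 _ hN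
      have := (full_mk S (u t) v).2 ⟨hf, hp.2⟩ j
      rw [this] at hj
      exact absurd hj (by simp)
    · intro hf
      apply hN2
      · by_contra hcon
        push Not at hcon
        exact hf ((full_mk S (u t) v).1 (fun j => by simpa using hcon j)).1
      · exact (gS_mk S (u t) v).2 hp.2
  refine le_trans (le_of_eq ?_) (key.trans (le_of_eq ?_))
  · congr 1
    refine Finset.sum_congr rfl fun V _ => ?_
    rw [mul_comm]
    congr 1
    simp only [c]
    rw [mul_comm _ (∏ b ∈ univ \ A, _), mul_comm _ (∏ b ∈ univ \ A, _), mul_assoc]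
    congr 1
    unfold bw lam
    rw [Finset.prod_mul_distrib]
    rw [mul_left_comm]
    congr 1
    · rw [Finset.prod_subtype A (p := fun b => b ∈ A) (by simp)]
      refine Finset.prod_congr rfl fun b _ => ?_
      congr 2
      have e1 := cnt_subtype (fun t => blk t = b.1) (fun t => full (mk S (u t) (V t)))
      refine e1.trans ?_
      have e2 : ∀ s : {t // p t}, (blk' s = b ∧ full (V s.1)) ↔ (blk s.1 = b.1 ∧ full (V s.1)) := by
        intro s
        rw [Subtype.ext_iff]
      rw [cnt_congr e2, cnt_subtype p (fun t => blk t = b.1 ∧ full (V t))]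
      apply cnt_congr
      intro t
      rw [full_mk]
      simp only [p]
      constructor
      · rintro ⟨h1, h2, h3⟩
        exact ⟨⟨by rw [h1]; exact b.2, h3⟩, h1, h2⟩
      · rintro ⟨⟨_, h3⟩, h1, h2⟩
        exact ⟨h1, h2, h3⟩
    · have := prod_blocks blk A (fun t => if full (mk S (u t) (V t)) then sgn (V t).2
          else if N (mk S (u t) (V t)).1 then 1 else 0)
      simp only [res]
      refine this.trans ?_
      have e3 : ∏ s : {t // p t}, (if full (V s.1) then sgn (V s.1).2 else 1) =
          ∏ t, if p t then (if full (V t) then sgn (V t).2 else 1) else 1 := by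
        exact prod_sub p (fun t => (if full (V t) then sgn (V t).2 else 1))
      rw [e3, ← Finset.prod_mul_distrib]
      refine Finset.prod_congr rfl fun t _ => ?_
      by_cases hA : blk t ∈ A
      · by_cases hp : p t
        · have := hNp t (V t) hp
          by_cases hf : full (V t)
          · simp [hA, hp, hf, full_mk, hp.2]
          · simp [hA, hp, hf, full_mk, this]
        · have hf : ¬ full (mk S (u t) (V t)) := by
            rw [full_mk]
            exact fun h => hp ⟨hA, h.2⟩
          simp [hA, hp, hf]
      · have hp : ¬ p t := fun h => hA h.1
        simp [hA, hp]
  · refine Finset.sum_congr rfl fun V _ => ?_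
    simp only [c]
    rw [mul_comm (∏ b ∈ A, _), mul_comm _ (∏ b ∈ univ \ A, _), mul_assoc, mul_assoc]
    congr 1
    unfold sb
    rw [Finset.prod_mul_distrib, ← mul_assoc]
    congr 1
    · have e3 : ∏ s : {t // p t}, (if full (V s.1) then (0:ℝ) else 1) =
          ∏ t, if p t then (if full (V t) then (0:ℝ) else 1) else 1 := by
        exact prod_sub p (fun t => (if full (V t) then (0:ℝ) else 1))
      have := prod_blocks blk A (fun t => if N (mk S (u t) (V t)).1 then (1:ℝ) else 0)
      refine Eq.trans ?_ this.symm
      rw [e3, ← Finset.prod_mul_distrib]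
      refine Finset.prod_congr rfl fun t _ => ?_
      by_cases hA : blk t ∈ A
      · by_cases hp : p t
        · have := hNp t (V t) hp
          by_cases hf : full (V t)
          · simp [hA, hp, hf, this]
          · simp [hA, hp, hf, this]
        · simp [hA, hp]
      · have hp : ¬ p t := fun h => hA h.1
        simp [hA, hp]
    · rw [Finset.prod_subtype A (p := fun b => b ∈ A) (by simp)]
      refine Finset.prod_congr rfl fun b _ => ?_
      congr 2
      symm
      have e1 := cnt_subtype (fun t => blk t = b.1) (fun t => gS S (mk S (u t) (V t)))
      refine e1.trans ?_
      have e2 : ∀ s : {t // p t}, (blk' s = b) ↔ (blk s.1 = b.1) := by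
        intro s
        rw [Subtype.ext_iff]
      rw [cnt_congr e2, cnt_subtype p (fun t => blk t = b.1)]
      apply cnt_congr
      intro t
      rw [gS_mk]
      simp only [p]
      constructor
      · rintro ⟨h1, h3⟩
        exact ⟨⟨by rw [h1]; exact b.2, h3⟩, h1⟩
      · rintro ⟨⟨_, h3⟩, h1⟩
        exact ⟨h1, h3⟩

end disc
end UD

namespace UD
set_option linter.unusedSectionVars false
section blocks
variable {R : Type} [Fintype R] [DecidableEq R] {q : ℕ} (N : (Fin q → Bool) → Prop) [DecidablePred N]

theorem bw_eq (hN1 : ∀ M, N M → ∃ j, M j = false) (f : Bool → ℝ) (z : R → Row q) :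
    bw N f z = ∑ i, ∏ t, (if t = i then (if full (z t) then f (z t).2 else 0) else
      if N (z t).1 then 1 else 0) := by
  have hNf : ∀ t, full (z t) → ¬ N (z t).1 := by
    intro t hf hN
    obtain ⟨j, hj⟩ := hN1 _ hN
    rw [hf j] at hj
    exact absurd hj (by simp)
  unfold bw
  by_cases h : cnt (fun t => full (z t)) = 1
  · rw [if_pos h, one_mul]
    unfold cnt at h
    rw [Finset.card_eq_one] at h
    obtain ⟨i, hi⟩ := h
    have hi' : ∀ t, full (z t) ↔ t = i := by
      intro t
      have : t ∈ univ.filter (fun t => full (z t)) ↔ t ∈ ({i} : Finset R) := by rw [hi]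
      simpa using this
    rw [Finset.sum_eq_single i]
    · refine Finset.prod_congr rfl fun t _ => ?_
      by_cases ht : t = i
      · subst ht
        have hft : full (z t) := (hi' t).2 rfl
        simp [hft]
      · simp [ht, hi']
    · intro b _ hb
      refine Finset.prod_eq_zero (mem_univ b) ?_
      simp [hi', hb]
    · simp
  · rw [if_neg h, zero_mul]
    symm
    refine Finset.sum_eq_zero fun i _ => ?_
    by_cases hf : full (z i)
    · have : ∃ t, t ≠ i ∧ full (z t) := by
        by_contra hcon
        push Not at hcon
        apply h
        unfold cnt
        rw [Finset.card_eq_one]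
        refine ⟨i, ?_⟩
        ext t
        simp only [mem_filter, mem_univ, true_and, mem_singleton]
        constructor
        · intro ht
          by_contra h2
          exact hcon t h2 ht
        · rintro rfl; exact hf
      obtain ⟨t, ht, hft⟩ := this
      refine Finset.prod_eq_zero (mem_univ t) ?_
      simp [ht, hNf t hft]
    · refine Finset.prod_eq_zero (mem_univ i) ?_
      simp [hf]

theorem bw_sub (hN1 : ∀ M, N M → ∃ j, M j = false) (z : R → Row q) :
    bw N f1 z = - bw N sgn z + bw N f0 z := by
  rw [bw_eq N hN1, bw_eq N hN1, bw_eq N hN1, ← Finset.sum_neg_distrib, ← Finset.sum_add_distrib]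
  refine Finset.sum_congr rfl fun i _ => ?_
  rw [← Finset.mul_prod_erase univ _ (mem_univ i), ← Finset.mul_prod_erase univ _ (mem_univ i),
    ← Finset.mul_prod_erase univ _ (mem_univ i)]
  have : ∀ f : Bool → ℝ, ∏ t ∈ univ.erase i, (if t = i then (if full (z t) then f (z t).2 else 0) else
      if N (z t).1 then (1:ℝ) else 0) = ∏ t ∈ univ.erase i, (if N (z t).1 then (1:ℝ) else 0) := by
    intro f
    refine Finset.prod_congr rfl fun t ht => ?_
    rw [if_neg (Finset.ne_of_mem_erase ht)]
  rw [this, this, this]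
  by_cases hf : full (z i)
  · cases h : (z i).2 <;> simp [hf, f0, f1, sgn]
  · simp [hf]

theorem sum_full_f (f : Bool → ℝ) : ∑ a : Row q, (if full a then f a.2 else 0) = f true + f false := by
  rw [Fintype.sum_prod_type]
  have : ∀ x : Fin q → Bool, (∀ j, x j = true) ↔ x = fun _ => true := by
    intro x
    constructor
    · intro h; funext j; exact h j
    · rintro rfl j; rfl
  simp only [full, this]
  rw [Finset.sum_eq_single (fun _ => true)]
  · simp
  · intro b _ hb; simp [hb]
  · simp

theorem sum_N : ∑ a : Row q, (if N a.1 then (1:ℝ) else 0) = 2 * cnt N := by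
  rw [Fintype.sum_prod_type, cnt_sum, Finset.mul_sum]
  refine Finset.sum_congr rfl fun M _ => ?_
  rw [Fintype.sum_bool]
  split_ifs <;> norm_num

theorem sum_special (e : Row q → ℝ) (i : R) :
    ∑ z : R → Row q, ∏ t, (if t = i then e (z t) else if N (z t).1 then (1:ℝ) else 0) =
      (∑ a, e a) * (2 * cnt N) ^ (Fintype.card R - 1) := by
  rw [pi_prod (fun t a => (if t = i then e a else if N a.1 then (1:ℝ) else 0))]
  rw [← Finset.mul_prod_erase univ _ (mem_univ i)]
  simp only [if_true]
  congr 1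
  rw [Finset.prod_congr rfl (g := fun _ => (2 * cnt N : ℝ))]
  · rw [Finset.prod_const, Finset.card_erase_of_mem (mem_univ i)]; rfl
  · intro t ht
    simp only [if_neg (Finset.ne_of_mem_erase ht)]
    rw [sum_N]

theorem sum_bw (hN1 : ∀ M, N M → ∃ j, M j = false) (f : Bool → ℝ) (hf : f true + f false = 1) :
    ∑ z : R → Row q, bw N f z = Fintype.card R * (2 * cnt N) ^ (Fintype.card R - 1) := by
  simp only [bw_eq N hN1]
  rw [Finset.sum_comm]
  have := fun i : R => sum_special N (fun a : Row q => if full a then f a.2 else 0) i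
  simp only [this, sum_full_f, hf]
  simp

theorem card_gS (S : Finset (Fin q)) : ∑ a : Row q, (if gS S a then (1:ℝ) else 0) ≤ 2 * 2 ^ S.card := by
  have h1 : ∑ a : Row q, (if gS S a then (1:ℝ) else 0) = 2 * cnt (fun M : Fin q → Bool => ∀ j, j ∉ S → M j = true) := by
    rw [Fintype.sum_prod_type, cnt_sum, Finset.mul_sum]
    refine Finset.sum_congr rfl fun M _ => ?_
    rw [Fintype.sum_bool]
    by_cases h : ∀ j, j ∉ S → M j = true
    · rw [if_pos (show gS S (M, true) from h), if_pos (show gS S (M, false) from h), if_pos h]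
      norm_num
    · rw [if_neg (show ¬ gS S (M, true) from h), if_neg (show ¬ gS S (M, false) from h), if_neg h]
      norm_num
  rw [h1]
  have : cnt (fun M : Fin q → Bool => ∀ j, j ∉ S → M j = true) ≤ 2 ^ S.card := by
    rw [← Finset.card_powerset]
    unfold cnt
    refine Finset.card_le_card_of_injOn (fun M => univ.filter (fun j => M j = false)) ?_ ?_
    · intro M hM
      simp only [coe_filter, mem_univ, true_and, Set.mem_ofPred_eq] at hM
      simp only [coe_powerset, Set.mem_preimage, Set.mem_powerset_iff, coe_subset]
      intro j hj
      by_contra h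
      have := hM j h
      simp [this] at hj
    · intro M _ M' _ h
      funext j
      have : j ∈ univ.filter (fun j => M j = false) ↔ j ∈ univ.filter (fun j => M' j = false) := by
        simp only at h
        rw [h]
      simp only [mem_filter, mem_univ, true_and] at this
      cases h1 : M j <;> cases h2 : M' j <;> simp_all
  have : (cnt (fun M : Fin q → Bool => ∀ j, j ∉ S → M j = true) : ℝ) ≤ 2 ^ S.card := by exact_mod_cast this
  linarith

theorem sum_sb_sq (S : Finset (Fin q)) :
    (∑ z : R → Row q, sb N S z) ^ 2 ≤ (2 * cnt N) ^ Fintype.card R *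
      (Fintype.card R * (2 * 2 ^ S.card * (2 * cnt N) ^ (Fintype.card R - 1))) := by
  have h1 : (∑ z : R → Row q, sb N S z) ^ 2 ≤ (∑ z : R → Row q, ∏ t, (if N (z t).1 then (1:ℝ) else 0)) *
      ∑ z : R → Row q, (∏ t, (if N (z t).1 then (1:ℝ) else 0)) * (cnt (fun t => gS S (z t)) : ℝ) := by
    refine Finset.sum_sq_le_sum_mul_sum_of_sq_le_mul _ ?_ ?_ ?_
    · intro z _
      exact Finset.prod_nonneg fun t _ => by split_ifs <;> norm_num
    · intro z _
      exact mul_nonneg (Finset.prod_nonneg fun t _ => by split_ifs <;> norm_num) (by positivity)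
    · intro z _
      unfold sb
      rw [mul_pow, Real.sq_sqrt (by positivity)]
      apply le_of_eq; ring
  refine h1.trans ?_
  have h2 : ∑ z : R → Row q, ∏ t, (if N (z t).1 then (1:ℝ) else 0) = (2 * cnt N) ^ Fintype.card R := by
    rw [pi_prod (fun t (a : Row q) => if N a.1 then (1:ℝ) else 0)]
    simp only [sum_N]
    simp
  rw [h2]
  refine mul_le_mul_of_nonneg_left ?_ (by positivity)
  have h3 : ∀ z : R → Row q, (∏ t, (if N (z t).1 then (1:ℝ) else 0)) * (cnt (fun t => gS S (z t)) : ℝ) =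
      ∑ i, ∏ t, (if t = i then (if N (z t).1 ∧ gS S (z t) then (1:ℝ) else 0) else
      if N (z t).1 then (1:ℝ) else 0) := by
    intro z
    rw [cnt_sum, Finset.mul_sum]
    refine Finset.sum_congr rfl fun i _ => ?_
    rw [← Finset.mul_prod_erase univ _ (mem_univ i), ← Finset.mul_prod_erase univ _ (mem_univ i),
      mul_right_comm]
    congr 1
    · by_cases hN : N (z i).1 <;> by_cases hg : gS S (z i) <;> simp [hN, hg]
    · refine Finset.prod_congr rfl fun t ht => ?_
      rw [if_neg (Finset.ne_of_mem_erase ht)]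
  simp only [h3]
  rw [Finset.sum_comm]
  have := fun i : R => sum_special N (fun a : Row q => if N a.1 ∧ gS S a then (1:ℝ) else 0) i
  simp only [this]
  rw [Finset.sum_const, nsmul_eq_mul, Finset.card_univ]
  refine mul_le_mul_of_nonneg_left (mul_le_mul_of_nonneg_right ?_ (by positivity)) (by positivity)
  refine le_trans (Finset.sum_le_sum fun a _ => ?_) (card_gS S)
  by_cases hN : N a.1 <;> by_cases hg : gS S a <;> simp [hN, hg]

theorem sum_sb (S : Finset (Fin q)) (B : ℝ) (hB1 : (cnt N : ℝ) ≤ B) (hB2 : (2:ℝ) ^ S.card ≤ B)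
    (hR : 0 < Fintype.card R) :
    ∑ z : R → Row q, sb N S z ≤ (2 * B / √(Fintype.card R : ℝ)) *
      (Fintype.card R * (2 * cnt N) ^ (Fintype.card R - 1)) := by
  have hB0 : 0 ≤ B := le_trans (by positivity) hB1
  refine le_of_sq_le_sq (b := (2 * B / √(Fintype.card R : ℝ)) *
      (Fintype.card R * (2 * cnt N) ^ (Fintype.card R - 1))) ((sum_sb_sq N S).trans ?_) (by positivity)
  have hr : (0:ℝ) < Fintype.card R := by exact_mod_cast hR
  rw [mul_pow (2 * B / _) _ 2, div_pow, Real.sq_sqrt hr.le]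
  obtain ⟨r, hr'⟩ : ∃ r, Fintype.card R = r + 1 := ⟨_, (Nat.succ_pred_eq_of_pos hR).symm⟩
  rw [hr'] at hr ⊢
  rw [Nat.add_sub_cancel]
  have e : (2 * B) ^ 2 / ((r + 1 : ℕ) : ℝ) * (((r + 1 : ℕ) : ℝ) * (2 * (cnt N : ℝ)) ^ r) ^ 2 =
      (2 * (cnt N : ℝ)) ^ r * (((r + 1 : ℕ) : ℝ) * (2 * (cnt N : ℝ)) ^ r) * (4 * (B * B)) := by
    field_simp
    ring
  rw [e]
  have e2 : (2 * (cnt N : ℝ)) ^ (r + 1) * (((r + 1 : ℕ) : ℝ) * (2 * 2 ^ S.card * (2 * (cnt N : ℝ)) ^ r)) =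
     (2 * (cnt N : ℝ)) ^ r * (((r + 1 : ℕ) : ℝ) * (2 * (cnt N : ℝ)) ^ r) * (4 * (cnt N * 2 ^ S.card)) := by
    ring
  rw [e2]
  refine mul_le_mul_of_nonneg_left ?_ (by positivity)
  have := mul_le_mul hB1 hB2 (by positivity) hB0
  linarith

end blocks
end UD

namespace UD
set_option linter.unusedSectionVars false

theorem prod_split {β : Type} [Fintype β] [DecidableEq β] (A : Finset β) (f g : β → ℝ) :
    (∏ b ∈ A, f b) * ∏ b ∈ univ \ A, g b = ∏ b, if b ∈ A then f b else g b := by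
  have := Finset.prod_piecewise univ A f g
  rw [Finset.univ_inter] at this
  rw [← this]
  rfl

theorem avg_close {α : Type} [Fintype α] (w P : α → ℝ) (hw : ∀ Z, 0 ≤ w Z) (W : ℝ) (hW : 0 < W)
    (hsum : ∑ Z, w Z = W) (c ε : ℝ) (h : ∀ Z, w Z ≠ 0 → |P Z - c| ≤ ε) :
    |W⁻¹ * ∑ Z, P Z * w Z - c| ≤ ε := by
  have e : W⁻¹ * ∑ Z, P Z * w Z - c = W⁻¹ * ∑ Z, (P Z - c) * w Z := by
    simp only [sub_mul]
    rw [Finset.sum_sub_distrib, ← Finset.mul_sum, hsum]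
    field_simp
  rw [e, abs_mul, abs_of_pos (inv_pos.2 hW), inv_mul_le_iff₀ hW, ← hsum, Finset.sum_mul]
  refine (Finset.abs_sum_le_sum_abs _ _).trans (Finset.sum_le_sum fun Z _ => ?_)
  rw [abs_mul, abs_of_nonneg (hw Z), mul_comm]
  by_cases h0 : w Z = 0
  · simp [h0]
  · exact mul_le_mul_of_nonneg_left (h Z h0) (hw Z)

def fz {β : Type} [DecidableEq β] (z : Finset β) (b : β) : Bool → ℝ := if b ∈ z then f1 else f0

theorem fz_nonneg {β : Type} [DecidableEq β] (z : Finset β) (b : β) (y : Bool) : 0 ≤ fz z b y := by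
  unfold fz
  split_ifs
  · exact f1_nonneg y
  · exact f0_nonneg y

theorem fz_sum {β : Type} [DecidableEq β] (z : Finset β) (b : β) : fz z b true + fz z b false = 1 := by
  unfold fz
  split_ifs <;> simp [f0, f1]

/-- the structure of a cylinder intersection in our coordinates -/
def GoodCyl {T : Type} {q : ℕ} (N : (Fin q → Bool) → Prop) (B : ℝ) (χ : (T → Row q) → ℝ) : Prop :=
  ∃ (S : Finset (Fin q)) (ψ : (T → Row q) → ℝ) (φ : Fin q → (T → Row q) → ℝ),
    (∀ M, (∃ j, M j = false) → (∀ j, j ∉ S → M j = true) → N M) ∧ (2:ℝ) ^ S.card ≤ B ∧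
    (∀ Z, |ψ Z| ≤ 1) ∧ (∀ j ∈ S, ∀ Z, |φ j Z| ≤ 1) ∧
    (∀ Z Z', (∀ t, (Z t).1 = (Z' t).1) → ψ Z = ψ Z') ∧
    (∀ j ∈ S, ∀ Z Z', (∀ t, (Z t).2 = (Z' t).2 ∧ ∀ j', j' ≠ j → (Z t).1 j' = (Z' t).1 j') →
      φ j Z = φ j Z') ∧
    ∀ Z, χ Z = ψ Z * ∏ j ∈ S, φ j Z

theorem build_F {T β : Type} [Fintype T] [DecidableEq T] [Fintype β] [DecidableEq β] {q : ℕ}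
    (blk : T → β) (r : ℕ) (hr : 0 < r) (hblk : ∀ b, Fintype.card {t // blk t = b} = r)
    (N : (Fin q → Bool) → Prop) [DecidablePred N] (hN1 : ∀ M, N M → ∃ j, M j = false)
    (hν : 0 < cnt N) (B : ℝ) (hB1 : (cnt N : ℝ) ≤ B)
    {ι : Type} (J : Finset ι) (a : ι → ℝ) (χ : ι → (T → Row q) → ℝ) (K : ℝ)
    (hK : ∑ j ∈ J, |a j| ≤ K) (hχ : ∀ j ∈ J, GoodCyl N B (χ j))
    (h1 : ∀ Z, |∑ j ∈ J, a j * χ j Z| ≤ 1)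
    (hc0 : ∀ Z : T → Row q, (∀ t, full (Z t) → (Z t).2 = false) → |∑ j ∈ J, a j * χ j Z - 1| ≤ 1 / 4)
    (hc1 : ∀ Z : T → Row q, cnt (fun t => full (Z t) ∧ (Z t).2 = true) = 1 → |∑ j ∈ J, a j * χ j Z| ≤ 1 / 4) :
    ∃ F g : Finset β → ℝ, (∀ z, F z = ∑ A ∈ z.powerset, g A) ∧
      (∀ A, |g A| ≤ K * (2 * B / √(r : ℝ)) ^ A.card) ∧ (∀ z, |F z| ≤ 1) ∧ |F ∅ - 1| ≤ 1 / 4 ∧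
      ∀ b, |F {b}| ≤ 1 / 4 := by
  set NN : ℝ := r * (2 * cnt N) ^ (r - 1) with hNN
  have hNN0 : 0 < NN := by
    have : (0:ℝ) < r := by exact_mod_cast hr
    have : (0:ℝ) < cnt N := by exact_mod_cast hν
    positivity
  let W : ℝ := NN ^ Fintype.card β
  have hW : 0 < W := by positivity
  let w : Finset β → (T → Row q) → ℝ := fun z Z => ∏ b, bw N (fz z b) (res blk b Z)
  have hw0 : ∀ z Z, 0 ≤ w z Z := fun z Z => Finset.prod_nonneg fun b _ => bw_nonneg N _ (fz_nonneg z b) _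
  have hwsum : ∀ z, ∑ Z, w z Z = W := by
    intro z
    simp only [w]
    rw [fiber_prod blk (fun b y => bw N (fz z b) y)]
    simp only [sum_bw N hN1 _ (fz_sum z _), hblk]
    rw [Finset.prod_const, Finset.card_univ]
  let P : (T → Row q) → ℝ := fun Z => ∑ j ∈ J, a j * χ j Z
  let h : Finset β → (T → Row q) → ℝ := fun A Z =>
    (∏ b ∈ A, bw N sgn (res blk b Z)) * ∏ b ∈ univ \ A, bw N f0 (res blk b Z)
  refine ⟨fun z => W⁻¹ * ∑ Z, P Z * w z Z, fun A => W⁻¹ * ∑ Z, P Z * ((-1) ^ A.card * h A Z),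
    ?_, ?_, ?_, ?_, ?_⟩
  · intro z
    simp only
    rw [← Finset.mul_sum, Finset.sum_comm]
    congr 1
    refine Finset.sum_congr rfl fun Z _ => ?_
    rw [← Finset.mul_sum]
    congr 1
    have e1 : w z Z = (∏ b ∈ z, (- bw N sgn (res blk b Z) + bw N f0 (res blk b Z))) *
        ∏ b ∈ univ \ z, bw N f0 (res blk b Z) := by
      rw [prod_split]
      refine Finset.prod_congr rfl fun b _ => ?_
      unfold fz
      by_cases hb : b ∈ z
      · rw [if_pos hb, if_pos hb, bw_sub N hN1]
      · rw [if_neg hb, if_neg hb]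
    rw [e1, Finset.prod_add, Finset.sum_mul]
    refine Finset.sum_congr rfl fun A hA => ?_
    rw [Finset.mem_powerset] at hA
    simp only [h]
    rw [Finset.prod_neg, ← mul_assoc, mul_assoc]
    congr 1
    rw [← Finset.prod_union]
    · congr 1
      ext b
      simp only [mem_union, mem_sdiff, mem_univ, true_and]
      have := @hA b
      tauto
    · rw [Finset.disjoint_left]
      intro b hb
      simp only [mem_sdiff, mem_univ, true_and] at hb ⊢
      tauto
  · intro A
    have hD : ∀ j ∈ J, |∑ Z, χ j Z * h A Z| ≤ W * (2 * B / √(r : ℝ)) ^ A.card := by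
      intro j hj
      obtain ⟨S, ψ, φ, g1, g2, g3, g4, g5, g6, g7⟩ := hχ j hj
      simp only [g7]
      refine (disc blk N S hN1 g1 ψ φ g3 g4 g5 g6 A).trans ?_
      simp only [prod_split]
      rw [fiber_prod blk (fun b y => if b ∈ A then sb N S y else bw N f0 y)]
      have hB0 : 0 ≤ B := le_trans (by positivity) hB1
      have : W * (2 * B / √(r : ℝ)) ^ A.card = ∏ b, if b ∈ A then (2 * B / √(r : ℝ)) * NN else NN := by
        rw [← prod_split, Finset.prod_const, Finset.prod_const, mul_pow]
        simp only [W]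
        rw [← Finset.card_univ, ← Finset.card_sdiff_add_card_eq_card (Finset.subset_univ A), pow_add]
        ring
      rw [this]
      refine Finset.prod_le_prod ?_ ?_
      · intro b _
        refine Finset.sum_nonneg fun y _ => ?_
        split_ifs
        · unfold sb
          exact mul_nonneg (Finset.prod_nonneg fun t _ => by split_ifs <;> norm_num) (Real.sqrt_nonneg _)
        · exact bw_nonneg N _ f0_nonneg _
      · intro b _
        by_cases hb : b ∈ A
        · simp only [if_pos hb]
          have := sum_sb (R := {t // blk t = b}) N S B hB1 g2 (by rw [hblk]; exact hr)
          rw [hblk] at this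
          exact this
        · simp only [if_neg hb]
          rw [sum_bw N hN1 f0 (by simp [f0]), hblk]
    have e : ∑ Z, P Z * ((-1) ^ A.card * h A Z) = (-1) ^ A.card * ∑ j ∈ J, a j * ∑ Z, χ j Z * h A Z := by
      simp only [P, Finset.sum_mul, Finset.mul_sum]
      rw [Finset.sum_comm]
      refine Finset.sum_congr rfl fun j _ => Finset.sum_congr rfl fun Z _ => ?_
      ring
    dsimp only
    rw [e, abs_mul, abs_mul, abs_pow, abs_neg, abs_one, one_pow, one_mul, abs_of_pos (inv_pos.2 hW),
      inv_mul_le_iff₀ hW]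
    have hB0 : 0 ≤ B := le_trans (by positivity) hB1
    calc |∑ j ∈ J, a j * ∑ Z, χ j Z * h A Z| ≤ ∑ j ∈ J, |a j| * (W * (2 * B / √(r : ℝ)) ^ A.card) := by
          refine (Finset.abs_sum_le_sum_abs _ _).trans (Finset.sum_le_sum fun j hj => ?_)
          rw [abs_mul]
          exact mul_le_mul_of_nonneg_left (hD j hj) (abs_nonneg _)
      _ ≤ K * (W * (2 * B / √(r : ℝ)) ^ A.card) := by
          rw [← Finset.sum_mul]
          exact mul_le_mul_of_nonneg_right hK (by positivity)
      _ = _ := by ring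
  · intro z
    have := avg_close (w z) P (hw0 z) W hW (hwsum z) 0 1 (fun Z _ => by rw [sub_zero]; exact h1 Z)
    rwa [sub_zero] at this
  · refine avg_close (w ∅) P (hw0 ∅) W hW (hwsum ∅) 1 (1/4) (fun Z hZ => hc0 Z fun t hf => ?_)
    have h2 := (Finset.prod_ne_zero_iff.1 hZ) (blk t) (mem_univ _)
    unfold bw at h2
    have h3 := (Finset.prod_ne_zero_iff.1 (right_ne_zero_of_mul h2)) ⟨t, rfl⟩ (mem_univ _)
    simp only [res, if_pos hf, fz] at h3
    by_contra h4
    simp [f0, h4] at h3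
  · intro b0
    have key : ∀ Z, w {b0} Z ≠ 0 → |P Z - 0| ≤ 1 / 4 := by
      intro Z hZ
      rw [sub_zero]
      apply hc1
      have h2 := fun b => (Finset.prod_ne_zero_iff.1 hZ) b (mem_univ _)
      have h3 : ∀ t, full (Z t) → ((Z t).2 = true ↔ blk t = b0) := by
        intro t hf
        have h4 := h2 (blk t)
        unfold bw at h4
        have h5 := (Finset.prod_ne_zero_iff.1 (right_ne_zero_of_mul h4)) ⟨t, rfl⟩ (mem_univ _)
        simp only [res, if_pos hf, fz, mem_singleton] at h5
        by_cases hb : blk t = b0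
        · rw [if_pos hb] at h5
          simp only [hb, iff_true]
          by_contra h6
          simp [f1, h6] at h5
        · rw [if_neg hb] at h5
          simp only [hb, iff_false]
          intro h6
          simp [f0, h6] at h5
      have h4 := left_ne_zero_of_mul (h2 b0)
      have h5 : cnt (fun s : {t // blk t = b0} => full (Z s.1)) = 1 := by
        by_contra h6
        exact h4 (if_neg h6)
      rw [cnt_subtype (fun t => blk t = b0) (fun t => full (Z t))] at h5
      rw [← h5]
      apply cnt_congr
      intro t
      constructor
      · rintro ⟨hf, hy⟩
        exact ⟨(h3 t hf).1 hy, hf⟩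
      · rintro ⟨hb, hf⟩
        exact ⟨hf, (h3 t hf).2 hb⟩
    have := avg_close (w {b0}) P (hw0 _) W hW (hwsum _) 0 (1/4) key
    rwa [sub_zero] at this

end UD

set_option linter.unusedSectionVars false
namespace UD

theorem prod_low (j m : ℕ) (h : m < j) :
    (∏ i ∈ Finset.range m, ((i + 1 : ℕ) : ℝ) ^ 2 / |((i + 1 : ℕ) : ℝ) ^ 2 - (j : ℝ) ^ 2|) *
      ((j - 1).factorial * (j + m).factorial) = (m.factorial : ℝ) ^ 2 * (j - 1 - m).factorial * j.factorial := by
  induction m with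
  | zero => simp
  | succ m ih =>
    have ih := ih (by omega)
    rw [Finset.prod_range_succ]
    obtain ⟨d, rfl⟩ : ∃ d, j = m + 2 + d := ⟨j - (m + 2), by omega⟩
    have e1 : m + 2 + d - 1 - m = d + 1 := by omega
    have e2 : m + 2 + d - 1 - (m + 1) = d := by omega
    rw [e1] at ih
    rw [e2, ← add_assoc, Nat.factorial_succ (m + 2 + d + m), Nat.factorial_succ m]
    rw [Nat.factorial_succ d] at ih
    have e3 : |((m + 1 : ℕ) : ℝ) ^ 2 - ((m + 2 + d : ℕ) : ℝ) ^ 2| = (d + 1) * (m + 2 + d + m + 1) := by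
      rw [abs_of_nonpos]
      · push_cast; ring
      · push_cast; nlinarith [(Nat.cast_nonneg d : (0:ℝ) ≤ d), (Nat.cast_nonneg m : (0:ℝ) ≤ m)]
    rw [e3]
    have h1 : (d + 1 : ℝ) ≠ 0 := by positivity
    have h2 : (m + 2 + d + m + 1 : ℝ) ≠ 0 := by positivity
    push_cast at ih ⊢
    generalize (∏ i ∈ Finset.range m, ((i : ℝ) + 1) ^ 2 / |((i : ℝ) + 1) ^ 2 - ((m : ℝ) + 2 + d) ^ 2|) = P at *
    field_simp
    field_simp at ih
    linear_combination ih

theorem prod_all (j d : ℕ) (h : 0 < j) :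
    (∏ i ∈ (Finset.range (j + d)).erase (j - 1), ((i + 1 : ℕ) : ℝ) ^ 2 / |((i + 1 : ℕ) : ℝ) ^ 2 - (j : ℝ) ^ 2|) *
      (d.factorial * (2 * j + d).factorial) = 2 * ((j + d).factorial : ℝ) ^ 2 := by
  induction d with
  | zero =>
    have := prod_low j (j - 1) (by omega)
    obtain ⟨k, rfl⟩ : ∃ k, j = k + 1 := ⟨j - 1, by omega⟩
    have e : (Finset.range (k + 1 + 0)).erase (k + 1 - 1) = Finset.range k := by
      ext i; simp; omega
    rw [e]
    have e2 : 2 * (k + 1) + 0 = (k + 1 + k) + 1 := by ring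
    rw [e2, Nat.factorial_succ (k + 1 + k)]
    simp only [Nat.add_sub_cancel, Nat.sub_self, Nat.factorial_zero] at this
    have hk : (k.factorial : ℝ) ≠ 0 := by positivity
    have h2 : (∏ i ∈ Finset.range k, ((i + 1 : ℕ) : ℝ) ^ 2 / |((i + 1 : ℕ) : ℝ) ^ 2 - ((k + 1 : ℕ) : ℝ) ^ 2|) * (k + 1 + k).factorial
        = k.factorial * (k + 1).factorial := by
      apply mul_left_cancel₀ hk
      rw [← mul_assoc] at this
      simp only [Nat.cast_one] at this
      linear_combination this
    rw [Nat.factorial_succ k] at h2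
    rw [add_zero, Nat.factorial_succ k, Nat.factorial_zero]
    push_cast at h2 ⊢
    linear_combination (2 * (k:ℝ) + 2) * h2
  | succ d ih =>
    have e : (Finset.range (j + (d + 1))).erase (j - 1) = insert (j + d) ((Finset.range (j + d)).erase (j - 1)) := by
      ext i; simp; omega
    rw [e, Finset.prod_insert (by simp)]
    have e3 : |((j + d + 1 : ℕ) : ℝ) ^ 2 - (j : ℝ) ^ 2| = (d + 1) * (2 * j + d + 1) := by
      rw [abs_of_nonneg]
      · push_cast; ring
      · push_cast; nlinarith [(Nat.cast_nonneg d : (0:ℝ) ≤ d), (Nat.cast_nonneg j : (0:ℝ) ≤ j)]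
    rw [e3, ← add_assoc, ← add_assoc, Nat.factorial_succ, Nat.factorial_succ (2 * j + d), Nat.factorial_succ (j + d)]
    generalize (∏ i ∈ (Finset.range (j + d)).erase (j - 1), ((i + 1 : ℕ) : ℝ) ^ 2 / |((i + 1 : ℕ) : ℝ) ^ 2 - (j : ℝ) ^ 2|) = P at *
    have h1 : (d + 1 : ℝ) ≠ 0 := by positivity
    have h2 : (2 * j + d + 1 : ℝ) ≠ 0 := by positivity
    push_cast
    field_simp
    linear_combination ih

theorem prod_le_two (j c : ℕ) (h : j < c) :
    (∏ i ∈ (Finset.range c).erase j, ((i + 1 : ℕ) : ℝ) ^ 2 / |((i + 1 : ℕ) : ℝ) ^ 2 - ((j + 1 : ℕ) : ℝ) ^ 2|) ≤ 2 := by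
  obtain ⟨d, rfl⟩ : ∃ d, c = j + 1 + d := ⟨c - (j + 1), by omega⟩
  have := prod_all (j + 1) d (by omega)
  rw [Nat.add_sub_cancel] at this
  have h2 : (((j + 1 + d).factorial : ℝ)) ^ 2 ≤ d.factorial * (2 * (j + 1) + d).factorial := by
    have h3 := Nat.choose_le_centralBinom d (j + 1 + d)
    rw [Nat.centralBinom_eq_two_mul_choose] at h3
    have h4 := Nat.choose_mul_factorial_mul_factorial (n := 2 * (j + 1 + d)) (k := d) (by omega)
    have h5 := Nat.choose_mul_factorial_mul_factorial (n := 2 * (j + 1 + d)) (k := j + 1 + d) (by omega)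
    have e1 : 2 * (j + 1 + d) - d = 2 * (j + 1) + d := by omega
    have e2 : 2 * (j + 1 + d) - (j + 1 + d) = j + 1 + d := by omega
    rw [e1] at h4; rw [e2] at h5
    have h6 : 0 < (2 * (j + 1 + d)).choose d := Nat.choose_pos (by omega)
    have : (j + 1 + d).factorial ^ 2 ≤ d.factorial * (2 * (j + 1) + d).factorial := by
      have h7 : (2 * (j + 1 + d)).choose d * ((j + 1 + d).factorial ^ 2) ≤ (2 * (j + 1 + d)).choose d * (d.factorial * (2 * (j + 1) + d).factorial) := by
        rw [← mul_assoc, h4, ← h5, mul_assoc, ← sq]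
        exact Nat.mul_le_mul_right _ h3
      exact Nat.le_of_mul_le_mul_left h7 h6
    exact_mod_cast this
  have h8 : (0:ℝ) < d.factorial * (2 * (j + 1) + d).factorial := by positivity
  by_contra hc
  push Not at hc
  nlinarith

theorem prod_104 (c : ℕ) : ∏ i ∈ Finset.range c, (100 * ((i + 1 : ℕ) : ℝ) ^ 2) / (100 * ((i + 1 : ℕ) : ℝ) ^ 2 - 1) ≤ (26/25:ℝ) := by
  have key : ∀ c : ℕ, ∏ i ∈ Finset.range (c + 1), (100 * ((i + 1 : ℕ) : ℝ) ^ 2) / (100 * ((i + 1 : ℕ) : ℝ) ^ 2 - 1) ≤ (26/25:ℝ) - (1/50) / ((c:ℝ) + 1) := by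
    intro c
    induction c with
    | zero => norm_num
    | succ c ih =>
      rw [Finset.prod_range_succ]
      have hc : (0:ℝ) ≤ c := Nat.cast_nonneg c
      have hp : (0:ℝ) < 100 * ((c + 1 + 1 : ℕ) : ℝ) ^ 2 - 1 := by push_cast; nlinarith
      refine (mul_le_mul_of_nonneg_right ih (by positivity)).trans ?_
      push_cast at hp ⊢
      rw [← mul_div_assoc, div_le_iff₀ hp]
      field_simp
      nlinarith [mul_nonneg hc hc, mul_nonneg hc (mul_nonneg hc hc)]
  cases c with
  | zero => norm_num
  | succ c => exact (key c).trans (by have : (0:ℝ) ≤ (1/50) / (c + 1) := by positivity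
                                      linarith)

theorem sum_005 (c : ℕ) : ∑ i ∈ Finset.range c, 2 / (100 * ((i + 1 : ℕ) : ℝ) ^ 2 - 1) ≤ (1/20:ℝ) := by
  have key : ∀ c : ℕ, ∑ i ∈ Finset.range (c + 1), 2 / (100 * ((i + 1 : ℕ) : ℝ) ^ 2 - 1) ≤ (1/20:ℝ) - (1/40) / ((c:ℝ) + 1) := by
    intro c
    induction c with
    | zero => norm_num
    | succ c ih =>
      rw [Finset.sum_range_succ]
      have hc : (0:ℝ) ≤ c := Nat.cast_nonneg c
      have hp : (0:ℝ) < 100 * ((c + 1 + 1 : ℕ) : ℝ) ^ 2 - 1 := by push_cast; nlinarith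
      refine (add_le_add_left ih _).trans ?_
      have : 2 / (100 * ((c + 1 + 1 : ℕ) : ℝ) ^ 2 - 1) ≤ (1/40) / (c + 1) - (1/40) / (c + 1 + 1) := by
        rw [div_sub_div _ _ (by positivity) (by positivity), div_le_div_iff₀ hp (by positivity)]
        push_cast
        nlinarith [mul_nonneg hc hc]
      push_cast at this ⊢
      linarith
  cases c with
  | zero => norm_num
  | succ c => exact (key c).trans (by have : (0:ℝ) ≤ (1/40) / (c + 1) := by positivity
                                      linarith)
end UD

namespace UD

def vn (i : ℕ) : ℝ := if i = 0 then 1 else 100 * (i : ℝ) ^ 2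

theorem vn_inj : Function.Injective vn := by
  intro i j h
  have hne : ∀ i : ℕ, i ≠ 0 → (1:ℝ) ≠ 100 * (i:ℝ)^2 := by
    intro i hi h
    have : 1 = 100 * i ^ 2 := by exact_mod_cast h
    omega
  unfold vn at h
  by_cases hi : i = 0 <;> by_cases hj : j = 0
  · rw [hi, hj]
  · rw [if_pos hi, if_neg hj] at h; exact absurd h (hne j hj)
  · rw [if_neg hi, if_pos hj] at h; exact absurd h.symm (hne i hi)
  · rw [if_neg hi, if_neg hj] at h
    have : (i:ℝ)^2 = (j:ℝ)^2 := by linarith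
    have : i ^ 2 = j ^ 2 := by exact_mod_cast this
    exact Nat.pow_left_injective (n := 2) (by norm_num) this

theorem lag (c : ℕ) (q : Polynomial ℝ) (hq : q.degree < (c + 1 : ℕ)) (h0 : 13 / 20 ≤ q.eval 0)
    (h1 : |q.eval 1| ≤ 7 / 20) (h2 : ∀ j < c, |q.eval (100 * ((j + 1 : ℕ) : ℝ) ^ 2)| ≤ 11 / 10) : False := by
  have hE := Lagrange.eq_interpolate (s := Finset.range (c + 1)) (v := vn) (f := q) vn_inj.injOn (by rwa [Finset.card_range])
  have hv : q.eval 0 = ∑ i ∈ Finset.range (c + 1), q.eval (vn i) * ∏ j ∈ (Finset.range (c + 1)).erase i, (vn i - vn j)⁻¹ * (0 - vn j) := by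
    conv_lhs => rw [hE]
    rw [Lagrange.interpolate_apply, Polynomial.eval_finsetSum]
    refine Finset.sum_congr rfl fun i _ => ?_
    rw [Polynomial.eval_mul, Polynomial.eval_C, Lagrange.basis, Polynomial.eval_prod]
    congr 1
    refine Finset.prod_congr rfl fun j _ => ?_
    simp [Lagrange.basisDivisor]
  rw [Finset.sum_range_succ'] at hv
  have v0 : vn 0 = 1 := by simp [vn]
  have vs : ∀ j, vn (j + 1) = 100 * ((j + 1 : ℕ) : ℝ) ^ 2 := by intro j; simp [vn]
  have hpos : ∀ j : ℕ, 0 < 100 * ((j + 1 : ℕ) : ℝ) ^ 2 - 1 := by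
    intro j; push_cast; nlinarith [(Nat.cast_nonneg j : (0:ℝ) ≤ j)]
  have P0 : |∏ j ∈ (Finset.range (c + 1)).erase 0, (vn 0 - vn j)⁻¹ * (0 - vn j)| ≤ 26 / 25 := by
    have e : (Finset.range (c + 1)).erase 0 = (Finset.range c).map ⟨Nat.succ, Nat.succ_injective⟩ := by
      ext i; cases i <;> simp
    rw [e, Finset.prod_map, Finset.abs_prod]
    refine le_trans (le_of_eq ?_) (prod_104 c)
    refine Finset.prod_congr rfl fun j _ => ?_
    simp only [Function.Embedding.coeFn_mk, Nat.succ_eq_add_one, v0, vs]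
    rw [abs_mul, abs_inv, abs_sub_comm, abs_of_pos (hpos j), zero_sub, abs_neg, abs_of_nonneg (by positivity),
      div_eq_mul_inv, mul_comm]
  have Pj : ∀ i ∈ Finset.range c, |q.eval (vn (i + 1)) * ∏ j ∈ (Finset.range (c + 1)).erase (i + 1), (vn (i + 1) - vn j)⁻¹ * (0 - vn j)|
      ≤ 11 / 10 * (2 / (100 * ((i + 1 : ℕ) : ℝ) ^ 2 - 1)) := by
    intro i hi
    have e : (Finset.range (c + 1)).erase (i + 1) = insert 0 (((Finset.range c).erase i).map ⟨Nat.succ, Nat.succ_injective⟩) := by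
      ext j; cases j <;> simp
    rw [e, Finset.prod_insert (by simp), Finset.prod_map, abs_mul, abs_mul, Finset.abs_prod]
    simp only [Function.Embedding.coeFn_mk, Nat.succ_eq_add_one, v0, vs]
    have a1 := h2 i (Finset.mem_range.1 hi)
    have a2 : ∏ x ∈ (range c).erase i, |(100 * ((i + 1 : ℕ) : ℝ) ^ 2 - 100 * ((x + 1 : ℕ) : ℝ) ^ 2)⁻¹ * (0 - 100 * ((x + 1 : ℕ) : ℝ) ^ 2)| ≤ 2 := by
      refine le_trans (le_of_eq ?_) (prod_le_two i c (Finset.mem_range.1 hi))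
      refine Finset.prod_congr rfl fun x _ => ?_
      rw [← mul_sub, abs_mul, abs_inv, abs_mul, abs_sub_comm, zero_sub, abs_neg, abs_of_nonneg (by positivity : (0:ℝ) ≤ 100 * ((x + 1 : ℕ) : ℝ) ^ 2),
        abs_of_nonneg (by norm_num : (0:ℝ) ≤ 100), mul_inv, div_eq_mul_inv]
      ring
    have a3 : |(100 * ((i + 1 : ℕ) : ℝ) ^ 2 - 1)⁻¹ * (0 - 1)| = (100 * ((i + 1 : ℕ) : ℝ) ^ 2 - 1)⁻¹ := by
      rw [abs_mul, abs_inv, abs_of_pos (hpos i)]; simp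
    rw [a3]
    have h3 := inv_pos.2 (hpos i)
    rw [div_eq_mul_inv 2, mul_comm 2]
    exact mul_le_mul a1 (mul_le_mul_of_nonneg_left a2 h3.le)
      (mul_nonneg h3.le (Finset.prod_nonneg fun _ _ => abs_nonneg _)) (by norm_num)
  have S1 : |∑ i ∈ Finset.range c, q.eval (vn (i + 1)) * ∏ j ∈ (Finset.range (c + 1)).erase (i + 1), (vn (i + 1) - vn j)⁻¹ * (0 - vn j)| ≤ 11 / 10 * (1 / 20) := by
    refine (Finset.abs_sum_le_sum_abs _ _).trans ((Finset.sum_le_sum Pj).trans ?_)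
    rw [← Finset.mul_sum]
    exact mul_le_mul_of_nonneg_left (sum_005 c) (by norm_num)
  have S0 : |q.eval (vn 0) * ∏ j ∈ (Finset.range (c + 1)).erase 0, (vn 0 - vn j)⁻¹ * (0 - vn j)| ≤ 7 / 20 * (26 / 25) := by
    rw [abs_mul]
    refine mul_le_mul ?_ P0 (abs_nonneg _) (by norm_num)
    rwa [v0]
  have := le_abs_self (q.eval 0)
  have h5 : |q.eval 0| ≤ 11 / 10 * (1 / 20) + 7 / 20 * (26 / 25) := by
    conv_lhs => rw [hv]
    exact (abs_add_le _ _).trans (add_le_add S1 S0)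
  norm_num at h5
  linarith

/-- average over permutations -/
noncomputable def pav {M : ℕ} (g : Finset (Fin M) → ℝ) (A : Finset (Fin M)) : ℝ :=
  (M.factorial : ℝ)⁻¹ * ∑ σ : Equiv.Perm (Fin M), g (A.map σ.toEmbedding)

theorem pav_card {M : ℕ} (g : Finset (Fin M) → ℝ) (A B : Finset (Fin M)) (h : A.card = B.card) :
    pav g A = pav g B := by
  have e : {x // x ∈ A} ≃ {x // x ∈ B} := Fintype.equivOfCardEq (by simpa using h)
  let τ : Equiv.Perm (Fin M) := e.extendSubtype
  have hτ : A.map τ.toEmbedding = B := by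
    apply Finset.eq_of_subset_of_card_le
    · intro x hx
      obtain ⟨y, hy, rfl⟩ := Finset.mem_map.1 hx
      exact e.extendSubtype_mem y hy
    · rw [Finset.card_map, h]
  unfold pav
  congr 1
  rw [← Equiv.sum_comp (Equiv.mulRight τ)]
  refine Finset.sum_congr rfl fun σ _ => ?_
  congr 1
  rw [← hτ, Finset.map_map]
  rfl

theorem pav_abs {M : ℕ} (g : Finset (Fin M) → ℝ) (A : Finset (Fin M)) (a K : ℝ)
    (h : ∀ B, B.card = A.card → |g B - a| ≤ K) : |pav g A - a| ≤ K := by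
  have hM : (0:ℝ) < M.factorial := by positivity
  have : pav g A - a = (M.factorial : ℝ)⁻¹ * ∑ σ : Equiv.Perm (Fin M), (g (A.map σ.toEmbedding) - a) := by
    unfold pav
    rw [Finset.sum_sub_distrib, mul_sub, Finset.sum_const, Finset.card_univ, Fintype.card_perm, Fintype.card_fin, nsmul_eq_mul]
    field_simp
  rw [this, abs_mul, abs_of_pos (inv_pos.2 hM), inv_mul_le_iff₀ hM]
  refine (Finset.abs_sum_le_sum_abs _ _).trans ((Finset.sum_le_sum (g := fun _ => K) fun σ _ => h _ (by simp)).trans ?_)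
  rw [Finset.sum_const, Finset.card_univ, Fintype.card_perm, Fintype.card_fin, nsmul_eq_mul]

theorem pav_sum {M : ℕ} (F g : Finset (Fin M) → ℝ) (hF : ∀ z, F z = ∑ A ∈ z.powerset, g A) (z : Finset (Fin M)) :
    pav F z = ∑ A ∈ z.powerset, pav g A := by
  unfold pav
  rw [← Finset.mul_sum, Finset.sum_comm]
  congr 1
  refine Finset.sum_congr rfl fun σ _ => ?_
  rw [hF]
  symm
  refine Finset.sum_bij (fun A _ => A.map σ.toEmbedding) ?_ ?_ ?_ ?_
  · intro A hA; rw [Finset.mem_powerset] at *; exact Finset.map_subset_map.2 hA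
  · intro A _ B _ h; exact Finset.map_injective _ h
  · intro B hB
    rw [Finset.mem_powerset] at hB
    obtain ⟨u, hu, rfl⟩ := Finset.subset_map_iff.1 hB
    exact ⟨u, Finset.mem_powerset.2 hu, rfl⟩
  · intros; rfl

theorem poly_contra (c M : ℕ) (hM : M = 100 * c ^ 2) (hc : 0 < c) (F g : Finset (Fin M) → ℝ) (D : ℝ) (hD : 0 ≤ D)
    (hDc : (100 * c ^ 2 : ℝ) * D ≤ c / 100)
    (hF : ∀ z, F z = ∑ A ∈ z.powerset, g A) (hg : ∀ A, |g A| ≤ 2 ^ c * D ^ A.card)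
    (h1 : ∀ z, |F z| ≤ 1) (h0 : |F ∅ - 1| ≤ 1 / 4) (hb : ∀ b, |F {b}| ≤ 1 / 4) : False := by
  have hini : ∀ s ≤ M, ∃ A : Finset (Fin M), A.card = s := fun s hs => by
    obtain ⟨A, _, hA⟩ := Finset.exists_subset_card_eq (s := (Finset.univ : Finset (Fin M))) (n := s) (by simpa using hs)
    exact ⟨A, hA⟩
  choose! ini hi using hini
  let α : ℕ → ℝ := fun s => if s ≤ M then pav g (ini s) else 0
  have hα : ∀ A : Finset (Fin M), pav g A = α A.card := by
    intro A
    have : A.card ≤ M := by simpa using Finset.card_le_univ A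
    simp only [α, if_pos this]
    exact pav_card g _ _ (hi _ this).symm
  have hα2 : ∀ s, |α s| ≤ 2 ^ c * D ^ s := by
    intro s
    by_cases hs : s ≤ M
    · simp only [α, if_pos hs]
      have := pav_abs g (ini s) 0 (2 ^ c * D ^ s) (by
        intro B hB
        rw [sub_zero, ← hi s hs, ← hB]; exact hg B)
      rwa [sub_zero] at this
    · simp only [α, if_neg hs, abs_zero]; positivity
  let p : ℕ → ℝ := fun t => pav F (ini t)
  have hp : ∀ t ≤ M, p t = ∑ s ∈ Finset.range (t + 1), (t.choose s : ℝ) * α s := by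
    intro t ht
    simp only [p]
    rw [pav_sum F g hF]
    simp only [hα]
    rw [Finset.sum_powerset_apply_card (fun s => α s), hi t ht]
    simp [nsmul_eq_mul]
  let q : Polynomial ℝ := ∑ s ∈ Finset.range (c + 1), Polynomial.C (α s / s.factorial) * descPochhammer ℝ s
  have hq : q.degree < (c + 1 : ℕ) := by
    refine (Polynomial.degree_sum_le _ _).trans_lt ?_
    rw [Finset.sup_lt_iff (by exact WithBot.bot_lt_coe _)]
    intro s hs
    refine (Polynomial.degree_le_of_natDegree_le ((Polynomial.natDegree_C_mul_le _ _).trans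
      (descPochhammer_natDegree ℝ s).le)).trans_lt ?_
    exact_mod_cast Finset.mem_range.1 hs
  have hqe : ∀ t : ℕ, q.eval (t : ℝ) = ∑ s ∈ Finset.range (c + 1), (t.choose s : ℝ) * α s := by
    intro t
    simp only [q]
    rw [Polynomial.eval_finsetSum]
    refine Finset.sum_congr rfl fun s _ => ?_
    rw [Polynomial.eval_mul, Polynomial.eval_C, descPochhammer_eval_eq_descFactorial, Nat.descFactorial_eq_factorial_mul_choose]
    have : (s.factorial : ℝ) ≠ 0 := by positivity
    push_cast
    field_simp
  have herr : ∀ t ≤ M, |q.eval (t : ℝ) - p t| ≤ 1 / 10 := by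
    intro t ht
    have e1 : p t = ∑ s ∈ Finset.range (t + c + 1), (t.choose s : ℝ) * α s := by
      rw [hp t ht]
      apply Finset.sum_subset
      · intro s; simp; omega
      · intro s _ hs
        rw [Finset.mem_range, not_lt] at hs
        rw [Nat.choose_eq_zero_of_lt (by omega)]; simp
    have e2 : p t - q.eval (t : ℝ) = ∑ s ∈ (Finset.range (t + c + 1)) \ (Finset.range (c + 1)), (t.choose s : ℝ) * α s := by
      rw [e1, hqe, Finset.sum_sdiff_eq_sub]
      intro s; simp; omega
    rw [abs_sub_comm, e2]
    have hx : (0:ℝ) ≤ 100 * D := by positivity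
    calc |∑ s ∈ (Finset.range (t + c + 1)) \ (Finset.range (c + 1)), (t.choose s : ℝ) * α s|
        ≤ ∑ s ∈ (Finset.range (t + c + 1)) \ (Finset.range (c + 1)), (1/50)^c * ((100 * D) ^ s * (t.choose s : ℝ)) := by
          refine (Finset.abs_sum_le_sum_abs _ _).trans (Finset.sum_le_sum fun s hs => ?_)
          simp only [Finset.mem_sdiff, Finset.mem_range, not_lt] at hs
          rw [abs_mul, abs_of_nonneg (by positivity : (0:ℝ) ≤ t.choose s)]
          have h3 : (2:ℝ) ^ c * D ^ s ≤ (1/50)^c * (100 * D) ^ s := by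
            rw [mul_pow, ← mul_assoc]
            refine mul_le_mul_of_nonneg_right ?_ (by positivity)
            have : (100:ℝ) ^ c ≤ 100 ^ s := pow_le_pow_right₀ (by norm_num) (by omega)
            calc (2:ℝ) ^ c = (1/50)^c * 100 ^ c := by rw [← mul_pow]; norm_num
              _ ≤ _ := mul_le_mul_of_nonneg_left this (by positivity)
          have := (hα2 s).trans h3
          calc (t.choose s : ℝ) * |α s| ≤ (t.choose s : ℝ) * ((1/50)^c * (100 * D) ^ s) := mul_le_mul_of_nonneg_left this (by positivity)
            _ = _ := by ring
      _ ≤ ∑ s ∈ Finset.range (t + c + 1), (1/50)^c * ((100 * D) ^ s * (t.choose s : ℝ)) := 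
          Finset.sum_le_sum_of_subset_of_nonneg Finset.sdiff_subset (fun _ _ _ => by positivity)
      _ = (1/50)^c * (100 * D + 1) ^ t := by
          rw [← Finset.mul_sum, add_pow]
          congr 1
          symm
          simp only [one_pow, mul_one]
          apply Finset.sum_subset
          · intro s; simp; omega
          · intro s _ hs
            rw [Finset.mem_range, not_lt] at hs
            rw [Nat.choose_eq_zero_of_lt (by omega)]; simp
      _ ≤ (1/50)^c * Real.exp 1 ^ c := by
          refine mul_le_mul_of_nonneg_left ?_ (by positivity)
          calc (100 * D + 1) ^ t ≤ (100 * D + 1) ^ M := pow_le_pow_right₀ (by linarith) ht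
            _ ≤ Real.exp (100 * D) ^ M := pow_le_pow_left₀ (by positivity) (Real.add_one_le_exp _) _
            _ = Real.exp (M * (100 * D)) := by rw [← Real.exp_nat_mul]
            _ ≤ Real.exp (c * 1) := by
              apply Real.exp_le_exp.2
              rw [hM]; push_cast
              linarith
            _ = _ := by rw [Real.exp_nat_mul]
      _ ≤ (1/10)^c := by
          rw [← mul_pow]
          refine pow_le_pow_left₀ (by positivity) ?_ _
          have := Real.exp_one_lt_d9
          linarith
      _ ≤ 1 / 10 := by
          have : (1/10:ℝ)^c ≤ (1/10)^1 := pow_le_pow_of_le_one (by norm_num) (by norm_num) hc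
          simpa using this
  have hM1 : 1 ≤ M := by rw [hM]; have := Nat.pow_pos (n := 2) hc; omega
  have p0 : |p 0 - 1| ≤ 1 / 4 := by
    refine pav_abs F _ 1 _ ?_
    intro B hB
    rw [hi 0 (by omega), Finset.card_eq_zero] at hB
    rw [hB]; exact h0
  have p1 : |p 1| ≤ 1 / 4 := by
    have := pav_abs F (ini 1) 0 (1/4) (by
      intro B hB
      rw [hi 1 hM1, Finset.card_eq_one] at hB
      obtain ⟨b, rfl⟩ := hB
      rw [sub_zero]; exact hb b)
    rwa [sub_zero] at this
  have pt : ∀ t, |p t| ≤ 1 := by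
    intro t
    have := pav_abs F (ini t) 0 1 (by intro B _; rw [sub_zero]; exact h1 B)
    rwa [sub_zero] at this
  have q0 := herr 0 (by omega)
  have q1 := herr 1 hM1
  refine lag c q hq ?_ ?_ ?_
  · rw [Nat.cast_zero] at q0
    rw [abs_le] at q0 p0
    linarith
  · rw [Nat.cast_one] at q1
    rw [abs_le] at *
    constructor <;> linarith
  · intro j hj
    have := herr (100 * (j + 1) ^ 2) (by
      rw [hM]; exact Nat.mul_le_mul_left _ (Nat.pow_le_pow_left (by omega) 2))
    have h4 := pt (100 * (j + 1) ^ 2)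
    push_cast at this ⊢
    rw [abs_le] at *
    constructor <;> linarith
end UD

namespace UD

def NP (c q : ℕ) (M : Fin q → Bool) : Prop :=
  (∃ j, M j = false) ∧ (univ.filter fun j => M j = false).card ≤ c

instance (c q : ℕ) : DecidablePred (NP c q) := fun _ => by unfold NP; infer_instance

def BN (c k : ℕ) : ℕ := ∑ i ∈ Finset.range (min c k + 1), k.choose i

theorem cnt_NP (c q : ℕ) : cnt (NP c q) ≤ BN c (q + 1) := by
  unfold cnt
  calc (univ.filter (NP c q)).card ≤ ((Finset.range (min c (q + 1) + 1)).biUnion fun i => Finset.powersetCard i (univ : Finset (Fin q))).card := by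
        refine Finset.card_le_card_of_injOn (fun M => univ.filter fun j => M j = false) ?_ ?_
        · intro M hM
          have hM := (Finset.mem_filter.1 hM).2
          simp only [Finset.coe_biUnion, Set.mem_iUnion, Finset.mem_coe, Finset.mem_range, Finset.mem_powersetCard]
          refine ⟨_, ?_, Finset.subset_univ _, rfl⟩
          have h1 := hM.2
          have h2 : (univ.filter fun j => M j = false).card ≤ q := by
            simpa using Finset.card_le_univ (univ.filter fun j => M j = false)
          omega
        · intro M _ M' _ h
          funext j
          have : j ∈ (univ.filter fun j => M j = false) ↔ j ∈ (univ.filter fun j => M' j = false) := by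
            simp only at h
            rw [h]
          simp only [Finset.mem_filter, Finset.mem_univ, true_and] at this
          cases h1 : M j <;> cases h2 : M' j <;> simp_all
    _ ≤ ∑ i ∈ Finset.range (min c (q + 1) + 1), (Finset.powersetCard i (univ : Finset (Fin q))).card := Finset.card_biUnion_le
    _ ≤ _ := by
        refine Finset.sum_le_sum fun i _ => ?_
        rw [Finset.card_powersetCard, Finset.card_univ, Fintype.card_fin]
        exact Nat.choose_le_choose i (Nat.le_succ q)

theorem two_pow_BN (c k s : ℕ) (h : s ≤ min c k) : 2 ^ s ≤ BN c k := by
  rw [← Nat.sum_range_choose]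
  refine (Finset.sum_le_sum fun i _ => Nat.choose_le_choose i (h.trans (min_le_right _ _))).trans ?_
  exact Finset.sum_le_sum_of_subset (Finset.range_mono (by omega))

/-- extension by zero rows -/
noncomputable def ex {T : Type} {n q : ℕ} (e : T → Fin n) (Z : T → Row q) : Fin n → Fin (q + 1) → Bool :=
  Function.extend e (fun t => (Fin.cons (Z t).2 (Z t).1 : Fin (q + 1) → Bool)) (fun _ _ => false)

theorem ex_all {T : Type} {n q : ℕ} (e : T → Fin n) (he : Function.Injective e) (Z : T → Row q) (i : Fin n) :
    (∀ j, ex e Z i j = true) ↔ ∃ t, e t = i ∧ full (Z t) ∧ (Z t).2 = true := by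
  unfold ex
  by_cases h : ∃ t, e t = i
  · obtain ⟨t, rfl⟩ := h
    rw [he.extend_apply]
    rw [Fin.forall_fin_succ]
    simp only [Fin.cons_zero, Fin.cons_succ]
    constructor
    · rintro ⟨h1, h2⟩; exact ⟨t, rfl, h2, h1⟩
    · rintro ⟨t', h0, h1, h2⟩
      rw [he h0] at *
      exact ⟨h2, h1⟩
  · rw [Function.extend_apply' _ _ _ h]
    constructor
    · intro h; simpa using h 0
    · rintro ⟨t, ht, _⟩; exact absurd ⟨t, ht⟩ h

theorem ex_count {T : Type} [Fintype T] {n q : ℕ} (e : T → Fin n) (he : Function.Injective e) (Z : T → Row q) :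
    (Finset.univ.filter (fun i : Fin n => ∀ j, ex e Z i j = true)).card = cnt (fun t => full (Z t) ∧ (Z t).2 = true) := by
  unfold cnt
  rw [← Finset.card_map ⟨e, he⟩]
  congr 1
  ext i
  simp only [Finset.mem_filter, Finset.mem_univ, true_and, Finset.mem_map, Function.Embedding.coeFn_mk, ex_all e he]
  constructor
  · rintro ⟨t, h1, h2⟩; exact ⟨t, h2, h1⟩
  · rintro ⟨t, h1, h2⟩; exact ⟨t, h2, h1⟩

theorem disj_iff (n k : ℕ) (X : Fin n → Fin k → Bool) :
    DISJ n k X = true ↔ (Finset.univ.filter (fun i : Fin n => ∀ j, X i j = true)).card = 0 := by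
  unfold DISJ
  rw [decide_eq_true_iff, Finset.card_eq_zero, Finset.filter_eq_empty_iff]
  constructor
  · intro h i _ h2
    obtain ⟨j, hj⟩ := h i
    rw [h2 j] at hj; cases hj
  · intro h i
    have := h (Finset.mem_univ i)
    push Not at this
    obtain ⟨j, hj⟩ := this
    exact ⟨j, by simpa using hj⟩

theorem ex_congr {T : Type} {n q : ℕ} (e : T → Fin n) (he : Function.Injective e) (Z Z' : T → Row q) (j : Fin (q + 1))
    (h : ∀ t, (Fin.cons (Z t).2 (Z t).1 : Fin (q + 1) → Bool) j = (Fin.cons (Z' t).2 (Z' t).1 : Fin (q + 1) → Bool) j) (i : Fin n) :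
    ex e Z i j = ex e Z' i j := by
  unfold ex
  by_cases hi : ∃ t, e t = i
  · obtain ⟨t, rfl⟩ := hi
    rw [he.extend_apply, he.extend_apply]; exact h t
  · rw [Function.extend_apply' _ _ _ hi, Function.extend_apply' _ _ _ hi]

theorem good_of_cyl {T : Type} {n q c : ℕ} (e : T → Fin n) (he : Function.Injective e)
    (χ : (Fin n → Fin (q + 1) → Bool) → ℝ) (S : Finset (Fin (q + 1))) (hS : S.card ≤ min c (q + 1))
    (h : IsCylinderOn n (q + 1) S χ) : GoodCyl (T := T) (NP c q) (BN c (q + 1)) (fun Z => χ (ex e Z)) := by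
  classical
  obtain ⟨φ, h1, h2, h3⟩ := h
  let S' : Finset (Fin q) := univ.filter fun j => j.succ ∈ S
  have hS' : S'.card ≤ S.card := by
    refine Finset.card_le_card_of_injOn Fin.succ ?_ (Fin.succ_injective q).injOn
    intro j hj
    exact (Finset.mem_filter.1 hj).2
  have habs : ∀ j ∈ S, ∀ X, |φ j X| ≤ 1 := by
    intro j hj X
    rcases h1 j hj X with h | h <;> rw [h] <;> norm_num
  refine ⟨S', fun Z => if 0 ∈ S then φ 0 (ex e Z) else 1, fun j Z => φ j.succ (ex e Z), ?_, ?_, ?_, ?_, ?_, ?_, ?_⟩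
  · intro M hM hM2
    refine ⟨hM, le_trans (Finset.card_le_card ?_) (hS'.trans (hS.trans (min_le_left _ _)))⟩
    intro j hj
    by_contra hc
    have := hM2 j hc
    rw [(Finset.mem_filter.1 hj).2] at this
    cases this
  · exact_mod_cast two_pow_BN c (q + 1) _ (hS'.trans hS)
  · intro Z
    dsimp only
    split_ifs with h0
    · exact habs 0 h0 _
    · simp
  · intro j hj Z
    exact habs _ (Finset.mem_filter.1 hj).2 _
  · intro Z Z' hZ
    dsimp only
    split_ifs with h0
    · refine h2 0 h0 _ _ fun i j' hj' => ex_congr e he _ _ _ (fun t => ?_) i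
      obtain ⟨j, rfl⟩ := Fin.exists_succ_eq.2 hj'
      simp [hZ t]
    · rfl
  · intro j hj Z Z' hZ
    refine h2 _ (Finset.mem_filter.1 hj).2 _ _ fun i j' hj' => ex_congr e he _ _ _ (fun t => ?_) i
    rcases Fin.eq_zero_or_eq_succ j' with rfl | ⟨j'', rfl⟩
    · simpa using (hZ t).1
    · simpa using (hZ t).2 j'' (fun h => hj' (by rw [h]))
  · intro Z
    dsimp only
    rw [h3]
    have : ∏ j ∈ S, φ j (ex e Z) = ∏ j, if j ∈ S then φ j (ex e Z) else 1 := by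
      rw [Finset.prod_ite_mem, Finset.univ_inter]
    rw [this, Fin.prod_univ_succ, Finset.prod_filter]

theorem core_contra (n q c : ℕ) (hq : 0 < q) (hc : 0 < c)
    (hn : 40000000000 * (BN c (q + 1) ^ 2 * c ^ 4) ≤ n) (ι : Type) (J : Finset ι) (a : ι → ℝ)
    (χ : ι → ((Fin n → Fin (q + 1) → Bool) → ℝ))
    (hχ : ∀ j ∈ J, ∃ S : Finset (Fin (q + 1)), S.card ≤ min c (q + 1) ∧ IsCylinderOn n (q + 1) S (χ j))
    (ha : ∑ j ∈ J, |a j| ≤ 2 ^ c)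
    (h1 : ∀ X, |∑ j ∈ J, a j * χ j X| ≤ 1)
    (h2 : ∀ X, AtMostOneAllOnes n (q + 1) X →
          |(if DISJ n (q + 1) X then (1 : ℝ) else 0) - ∑ j ∈ J, a j * χ j X| ≤ 1 / 4) : False := by
  set B := BN c (q + 1) with hB
  have hB1 : 1 ≤ B := by simpa using two_pow_BN c (q + 1) 0 (by omega)
  let M := 100 * c ^ 2
  let r := (20000 * c * B) ^ 2
  have hr : 0 < r := by positivity
  have hcard : Fintype.card (Fin M × Fin r) ≤ Fintype.card (Fin n) := by
    rw [Fintype.card_prod, Fintype.card_fin, Fintype.card_fin, Fintype.card_fin]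
    refine le_trans (le_of_eq ?_) hn
    simp only [M, r]; ring
  obtain ⟨⟨e, he⟩⟩ := Function.Embedding.nonempty_of_card_le hcard
  have hν : 0 < cnt (NP c q) := by
    unfold cnt
    refine Finset.card_pos.2 ⟨fun j => decide (j ≠ ⟨0, hq⟩), ?_⟩
    rw [Finset.mem_filter]
    refine ⟨Finset.mem_univ _, ⟨⟨0, hq⟩, by simp⟩, ?_⟩
    refine le_trans (Finset.card_le_card (t := {⟨0, hq⟩}) ?_) (by rw [Finset.card_singleton]; exact hc)
    intro j; simp
  have hr2 : √(r : ℝ) = 20000 * c * B := by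
    simp only [r]
    push_cast
    rw [Real.sqrt_sq (by positivity)]
  have hcR : (0:ℝ) < c := by exact_mod_cast hc
  have hBR : (0:ℝ) < B := by exact_mod_cast hB1
  obtain ⟨F, g, k1, k2, k3, k4, k5⟩ := build_F (T := Fin M × Fin r) (β := Fin M) (q := q) Prod.fst r hr (by
      intro b
      rw [Fintype.card_congr (Equiv.prodSubtypeFstEquivSubtypeProd (p := fun x => x = b)).symm.symm]
      simp) (NP c q) (fun M hM => hM.1) hν (B : ℝ)
      (by exact_mod_cast cnt_NP c q) J a (fun j Z => χ j (ex e Z)) (2 ^ c) ha (by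
        intro j hj
        obtain ⟨S, hS, hS2⟩ := hχ j hj
        exact good_of_cyl e he _ S hS hS2) (fun Z => h1 _) (by
        intro Z hZ
        have h0 : cnt (fun t => full (Z t) ∧ (Z t).2 = true) = 0 := by
          unfold cnt
          rw [Finset.card_eq_zero, Finset.filter_eq_empty_iff]
          rintro t _ ⟨u, v⟩
          rw [hZ t u] at v; cases v
        rw [← ex_count e he] at h0
        have := h2 (ex e Z) (by unfold AtMostOneAllOnes; omega)
        rw [if_pos ((disj_iff _ _ _).2 h0), abs_sub_comm] at this
        exact this) (by
        intro Z hZ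
        rw [← ex_count e he] at hZ
        have := h2 (ex e Z) (by unfold AtMostOneAllOnes; omega)
        rw [if_neg (by rw [disj_iff]; omega), zero_sub, abs_neg] at this
        exact this)
  refine poly_contra c M rfl hc F g (2 * B / √(r : ℝ)) (by positivity) ?_ k1 k2 k3 k4 k5
  rw [hr2]
  apply le_of_eq
  field_simp
  norm_num

theorem k_one (n c : ℕ) (hn : 0 < n) (ι : Type) (J : Finset ι) (a : ι → ℝ)
    (χ : ι → ((Fin n → Fin 1 → Bool) → ℝ))
    (hχ : ∀ j ∈ J, ∃ S : Finset (Fin 1), S.card ≤ min c 1 ∧ IsCylinderOn n 1 S (χ j))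
    (h2 : ∀ X, AtMostOneAllOnes n 1 X →
          |(if DISJ n 1 X then (1 : ℝ) else 0) - ∑ j ∈ J, a j * χ j X| ≤ 1 / 4) : False := by
  have hconst : ∀ j ∈ J, ∀ X Y, χ j X = χ j Y := by
    intro j hj X Y
    obtain ⟨S, _, φ, _, g2, g3⟩ := hχ j hj
    rw [g3, g3]
    refine Finset.prod_congr rfl fun i hi => g2 i hi _ _ fun _ j' hj' => absurd (Subsingleton.elim _ _) hj'
  let X : Fin n → Fin 1 → Bool := fun _ _ => false
  let Y : Fin n → Fin 1 → Bool := fun i _ => decide (i = ⟨0, hn⟩)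
  have hX : (Finset.univ.filter (fun i : Fin n => ∀ j, X i j = true)).card = 0 := by
    simp [X]
  have hY : (Finset.univ.filter (fun i : Fin n => ∀ j, Y i j = true)).card = 1 := by
    rw [Finset.card_eq_one]
    refine ⟨⟨0, hn⟩, ?_⟩
    ext i; simp [Y]
  have e : ∑ j ∈ J, a j * χ j X = ∑ j ∈ J, a j * χ j Y :=
    Finset.sum_congr rfl fun j hj => by rw [hconst j hj X Y]
  have a1 := h2 X (by unfold AtMostOneAllOnes; omega)
  have a2 := h2 Y (by unfold AtMostOneAllOnes; omega)
  rw [if_pos ((disj_iff _ _ _).2 hX)] at a1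
  rw [if_neg (by rw [disj_iff]; omega), ← e] at a2
  rw [abs_le] at a1 a2
  linarith
end UD

/-- There is a constant `C > 0` such that whenever a linear
combination `Π = Σ_j a_j χ_j` of `min{c,k}`-cylinder intersections with
`Σ_j |a_j| ≤ 2^c` satisfies `|Π| ≤ 1` everywhere and `|UDISJ_{n,k} − Π| ≤ 1/4` on
the set of matrices with at most one all-ones row, we have
`C(k,≤min{c,k})² · c⁴ ≥ C·n`. -/
theorem stmt_12 :
    ∃ C : ℝ, 0 < C ∧
      ∀ n k c : ℕ, 0 < n → 0 < k → 0 < c →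
      ∀ (ι : Type) (J : Finset ι) (a : ι → ℝ)
        (χ : ι → ((Fin n → Fin k → Bool) → ℝ)),
        (∀ j ∈ J, ∃ S : Finset (Fin k), S.card ≤ min c k ∧ IsCylinderOn n k S (χ j)) →
        (∑ j ∈ J, |a j| ≤ 2 ^ c) →
        (∀ X, |∑ j ∈ J, a j * χ j X| ≤ 1) →
        (∀ X, AtMostOneAllOnes n k X →
          |(if DISJ n k X then (1 : ℝ) else 0) - ∑ j ∈ J, a j * χ j X| ≤ 1 / 4) →
        C * n ≤ (∑ i ∈ Finset.range (min c k + 1), (k.choose i : ℝ)) ^ 2 * c ^ 4 := by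
  refine ⟨1 / 40000000000, by norm_num, ?_⟩
  intro n k c hn hk hc ι J a χ hχ ha h1 h2
  by_contra hlt
  push Not at hlt
  obtain ⟨q, rfl⟩ : ∃ q, k = q + 1 := ⟨k - 1, by omega⟩
  rcases Nat.eq_zero_or_pos q with rfl | hq
  · exact UD.k_one n c hn ι J a χ hχ h2
  · refine UD.core_contra n q c hq hc ?_ ι J a χ hχ ha h1 h2
    have e : (∑ i ∈ Finset.range (min c (q + 1) + 1), ((q + 1).choose i : ℝ)) = (UD.BN c (q + 1) : ℝ) := by
      unfold UD.BN; push_cast; rfl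
    rw [e] at hlt
    have : (40000000000 * (UD.BN c (q + 1) ^ 2 * c ^ 4) : ℝ) ≤ n := by linarith
    exact_mod_cast this
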